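/- arXiv:1710.01563 — 3 statements merged into one kernel-verified Lean document; each statement's English description precedes it below -/
import Mathlib

section
/- Let q be an odd prime power with q ≥ 5 and let F be a finite field with q elements. Then PSL₂(F) has a maximal subgroup H of odd index with H isomorphic to the dihedral group of order q+1 (DihedralGroup ((q+1)/2) in Mathlib's convention, where DihedralGroup m has order 2m) if and only if q > 7 and q ≡ 3 (mod 4). -/
/-!
A subgroup of `PSL₂(q)` of order `q + 1` has index `q.choose 2`, which for odd `q` is odd exactly
when `q ≡ 3 [MOD 4]`. In that case `-1` is not a square in the field, all involutions of `PSL₂(q)`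
are conjugate, and the centralizer `H` of an involution is dihedral of order `q + 1 = 4k`.

To see that `H` is maximal, let `H < M`, and let the cyclic subgroup of `H` of order `2k` act on
`M / H`. It fixes the coset `H`, and its other stabilizers have exponent dividing `2`, so that
`[M : H] ≡ 1 [MOD k]`. As `[M : H]` divides `q.choose 2 = (4k - 1)(2k - 1)`, this forces
`[M : H] = q.choose 2`, unless `k ∈ {2, 4, 14}`, that is `q ∈ {7, 15, 55}`.

For `q = 7`, let `H` be a dihedral subgroup of order `8` and `K` the centralizer in `PSL₂(7)` of a
noncentral involution of `H`. Then `K` has order `8` too, and `H ⊓ K` has index `2` in both `H` and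
`K`, hence is normalized by both. If `H` were maximal, `H ⊓ K` would be normal in the simple group
`PSL₂(7)`.
-/

open scoped MatrixGroups

/-! ### Orbit counting and the factors of `q.choose 2` -/

theorem card_modEq_one_of_dvd_card_orbit {G X : Type*} [Group G] [MulAction G X] [Finite X]
    {k : ℕ} {x₀ : X} (hx₀ : x₀ ∈ MulAction.fixedPoints G X)
    (hdvd : ∀ x ≠ x₀, k ∣ Nat.card (MulAction.orbit G x)) : Nat.card X ≡ 1 [MOD k] := by
  classical
  have := Fintype.ofFinite X
  have := Fintype.ofFinite (MulAction.orbitRel.Quotient G X)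
  have horbit : Nat.card (MulAction.orbit G x₀) = 1 := by
    rw [Nat.card_eq_fintype_card, MulAction.mem_fixedPoints_iff_card_orbit_eq_one.1 hx₀]
  rw [Nat.card_congr (MulAction.selfEquivSigmaOrbits' G X), Nat.card_sigma,
    ← Finset.add_sum_erase _ _ (Finset.mem_univ (Quotient.mk'' x₀)),
    MulAction.orbitRel.Quotient.orbit_mk, horbit]
  refine (Nat.modEq_zero_iff_dvd.2 (Finset.dvd_sum fun ω hω ↦ ?_)).add_left 1
  induction ω using Quotient.inductionOn' with
  | _ x =>
    rw [MulAction.orbitRel.Quotient.orbit_mk]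
    exact hdvd x fun h ↦ Finset.ne_of_mem_erase hω (by rw [h])

theorem card_dvd_of_forall_pow_eq_one {C : Type*} [Group C] [IsCyclic C] {n : ℕ}
    (h : ∀ c : C, c ^ n = 1) : Nat.card C ∣ n :=
  IsCyclic.exponent_eq_card (α := C) ▸ Monoid.exponent_dvd_iff_forall_pow_eq_one.2 h

theorem card_modEq_one_of_isCyclic {C X : Type*} [Group C] [IsCyclic C] [MulAction C X] [Finite X]
    {k : ℕ} (hC : Nat.card C = 2 * k) {x₀ : X} (hx₀ : x₀ ∈ MulAction.fixedPoints C X)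
    (hsq : ∀ x ≠ x₀, ∀ c ∈ MulAction.stabilizer C x, c ^ 2 = 1) : Nat.card X ≡ 1 [MOD k] := by
  refine card_modEq_one_of_dvd_card_orbit hx₀ fun x hx ↦ ?_
  have hdvd : Nat.card (MulAction.stabilizer C x) ∣ 2 :=
    card_dvd_of_forall_pow_eq_one fun c ↦ Subtype.ext (hsq x hx c c.2)
  have hcard := (MulAction.stabilizer C x).card_mul_index
  rw [MulAction.index_stabilizer, hC, ← Nat.card_coe_set_eq] at hcard
  exact Nat.dvd_of_mul_dvd_mul_left two_pos (hcard ▸ mul_dvd_mul_right hdvd _)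

theorem index_modEq_one_of_isCyclic {G : Type*} [Group G] {C H : Subgroup G} [H.FiniteIndex]
    [IsCyclic C] {k : ℕ} (hCH : C ≤ H) (hC : Nat.card C = 2 * k)
    (hsq : ∀ y ∉ H, ∀ x ∈ C, y⁻¹ * x * y ∈ H → x ^ 2 = 1) : H.index ≡ 1 [MOD k] := by
  refine card_modEq_one_of_isCyclic (x₀ := ((1 : G) : G ⧸ H)) hC
    (fun c ↦ QuotientGroup.eq.2 (by simpa using hCH c.2)) fun z ↦ ?_
  induction z using QuotientGroup.induction_on with
  | _ y =>
    intro hy c hc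
    have hyH : y ∉ H := fun h ↦ hy (QuotientGroup.eq.2 (by simpa using h))
    have hconj := QuotientGroup.eq.1 (MulAction.mem_stabilizer_iff.1 hc).symm
    exact Subtype.ext (hsq y hyH c c.2 (by simpa [Subgroup.smul_def, mul_assoc] using hconj))

theorem relIndex_modEq_one_of_isCyclic {G : Type*} [Group G] {C H M : Subgroup G} [IsCyclic C]
    [H.IsFiniteRelIndex M] {k : ℕ} (hCH : C ≤ H) (hHM : H ≤ M) (hC : Nat.card C = 2 * k)
    (hsq : ∀ y ∉ H, ∀ x ∈ C, y⁻¹ * x * y ∈ H → x ^ 2 = 1) : H.relIndex M ≡ 1 [MOD k] := by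
  let e := Subgroup.subgroupOfEquivOfLe (hCH.trans hHM)
  have : IsCyclic (C.subgroupOf M) := isCyclic_of_injective e.toMonoidHom e.injective
  exact index_modEq_one_of_isCyclic (C := C.subgroupOf M) (fun _ hx ↦ hCH hx)
    (by rw [Nat.card_congr e.toEquiv, hC])
    fun y hy x hx hxy ↦ Subtype.ext (hsq y hy x hx hxy)

theorem choose_two_two_mul_add_one (m : ℕ) : (2 * m + 1).choose 2 = (2 * m + 1) * m := by
  rw [Nat.choose_two_right, Nat.add_sub_cancel, mul_left_comm, Nat.mul_div_cancel_left _ two_pos]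

theorem odd_choose_two_iff {q : ℕ} (hq : Odd q) : Odd (q.choose 2) ↔ q % 4 = 3 := by
  obtain ⟨m, rfl⟩ := hq
  rw [choose_two_two_mul_add_one, Nat.odd_mul, Nat.odd_iff, Nat.odd_iff]
  omega

theorem choose_two_add_six_mul {q k : ℕ} (hqk : q + 1 = 4 * k) :
    q.choose 2 + 6 * k = k * (8 * k) + 1 := by
  obtain ⟨j, rfl⟩ : ∃ j, k = j + 1 := ⟨k - 1, by omega⟩
  rw [show q = 2 * (2 * j + 1) + 1 by omega, choose_two_two_mul_add_one]
  ring

theorem eq_one_or_eq_one_of_mul_add_six_mul {k m n : ℕ} (hk : 3 ≤ k) (hk4 : k ≠ 4) (hk14 : k ≠ 14)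
    (hnm : n * m + 6 * k = k * (8 * k) + 1) (hn : n ≡ 1 [MOD k]) : n = 1 ∨ m = 1 := by
  have hm : m ≡ 1 [MOD k] := by
    have hnm' : n * m ≡ 1 [MOD k] := by
      simpa [Nat.ModEq, Nat.add_mod] using congrArg (· % k) hnm
    simpa using (hn.mul_right m).symm.trans hnm'
  have hn0 : n ≠ 0 := by rintro rfl; nlinarith
  have hm0 : m ≠ 0 := by rintro rfl; nlinarith
  obtain ⟨a, rfl⟩ : ∃ a, n = 1 + k * a := by
    obtain ⟨a, ha⟩ := (Nat.modEq_iff_dvd' (Nat.pos_of_ne_zero hn0)).1 hn.symm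
    exact ⟨a, by omega⟩
  obtain ⟨b, rfl⟩ : ∃ b, m = 1 + k * b := by
    obtain ⟨b, hb⟩ := (Nat.modEq_iff_dvd' (Nat.pos_of_ne_zero hm0)).1 hm.symm
    exact ⟨b, by omega⟩
  by_contra! hne
  have ha : 1 ≤ a := Nat.pos_of_ne_zero fun h ↦ hne.1 (by simp [h])
  have hb : 1 ≤ b := Nat.pos_of_ne_zero fun h ↦ hne.2 (by simp [h])
  have hab : a + b + k * (a * b) + 6 = 8 * k :=
    Nat.eq_of_mul_eq_mul_left (by omega : 0 < k) (by linarith)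
  have : a * b < 8 := by nlinarith
  have : a < 8 := by nlinarith
  have : b < 8 := by nlinarith
  interval_cases a <;> interval_cases b <;> omega

theorem not_isPrimePow_mul {a b : ℕ} (ha : 1 < a) (hb : 1 < b) (hab : a.Coprime b) :
    ¬ IsPrimePow (a * b) := fun h ↦ by
  rcases (hab.isPrimePow_dvd_mul h).1 dvd_rfl with hdvd | hdvd
  · exact absurd (Nat.le_of_dvd (by omega) hdvd) (by nlinarith)
  · exact absurd (Nat.le_of_dvd (by omega) hdvd) (by nlinarith)

theorem eq_one_or_eq_one_of_mul_eq_choose_two {q k m n : ℕ} (hq : IsPrimePow q) (hq7 : 7 < q)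
    (hqk : q + 1 = 4 * k) (hnm : n * m = q.choose 2) (hn : n ≡ 1 [MOD k]) : n = 1 ∨ m = 1 := by
  have hk4 : k ≠ 4 := fun h ↦
    not_isPrimePow_mul (a := 3) (b := 5) (by norm_num) (by norm_num) (by norm_num)
      (by rwa [show q = 3 * 5 by omega] at hq)
  have hk14 : k ≠ 14 := fun h ↦
    not_isPrimePow_mul (a := 5) (b := 11) (by norm_num) (by norm_num) (by norm_num)
      (by rwa [show q = 5 * 11 by omega] at hq)
  exact eq_one_or_eq_one_of_mul_add_six_mul (by omega) hk4 hk14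
    (hnm ▸ choose_two_add_six_mul hqk) hn

/-! ### Centralizers of involutions and dihedral groups -/

theorem comap_centralizer_singleton {G H : Type*} [Group G] [Group H] {f : G →* H}
    (hf : Function.Injective f) (x : G) :
    (Subgroup.centralizer {f x}).comap f = Subgroup.centralizer {x} := by
  ext y
  simp only [Subgroup.mem_comap, Subgroup.mem_centralizer_singleton_iff, ← map_mul, hf.eq_iff]

theorem card_centralizer_apply_mulEquiv {G H : Type*} [Group G] [Group H] (e : G ≃* H) (x : G) :
    Nat.card (Subgroup.centralizer {e x}) = Nat.card (Subgroup.centralizer {x}) := by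
  rw [← comap_centralizer_singleton (f := e.toMonoidHom) e.injective x]
  exact (Nat.card_congr (e.toEquiv.subtypeEquiv fun _ ↦ Iff.rfl)).symm

theorem relIndex_comm_of_card_eq {G : Type*} [Group G] [Finite G] {H K : Subgroup G}
    (hHK : Nat.card H = Nat.card K) : H.relIndex K = K.relIndex H := by
  refine Nat.eq_of_mul_eq_mul_left (Nat.card_pos (α := (H ⊓ K : Subgroup G))) ?_
  rw [← Subgroup.inf_relIndex_right H K, ← Subgroup.inf_relIndex_left H K,
    ← Subgroup.relIndex_bot_left,
    Subgroup.relIndex_mul_relIndex _ _ _ bot_le inf_le_right,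
    Subgroup.relIndex_mul_relIndex _ _ _ bot_le inf_le_left, Subgroup.relIndex_bot_left,
    Subgroup.relIndex_bot_left, hHK]

theorem normal_inf_of_relIndex_eq_two {G : Type*} [Group G] {H K : Subgroup G} (hH : IsCoatom H)
    (hHK : H.relIndex K = 2) (hKH : K.relIndex H = 2) : (H ⊓ K).Normal := by
  have hle_normalizer {M : Subgroup G} (hle : H ⊓ K ≤ M) (hM : (H ⊓ K).relIndex M = 2) :
      M ≤ Subgroup.normalizer (H ⊓ K : Subgroup G) :=
    (Subgroup.normal_subgroupOf_iff_le_normalizer hle).1 (Subgroup.normal_of_index_eq_two hM)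
  have hH_le := hle_normalizer inf_le_left (by rw [Subgroup.inf_relIndex_left, hKH])
  have hK_le := hle_normalizer inf_le_right (by rw [Subgroup.inf_relIndex_right, hHK])
  refine Subgroup.normalizer_eq_top_iff.1 ((hH.le_iff.1 hH_le).resolve_right fun h ↦ ?_)
  rw [Subgroup.relIndex_eq_one.2 (h ▸ hK_le)] at hHK
  omega

theorem index_centralizer_sr_zero :
    (Subgroup.centralizer {DihedralGroup.sr (0 : ZMod 4)}).index = 2 := by
  rw [Subgroup.index_eq_two_iff]
  simp only [Subgroup.mem_centralizer_singleton_iff]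
  exact ⟨.r 1, by decide⟩

theorem not_isCoatom_of_mulEquiv_dihedralGroup_four {G : Type*} [Group G] [Finite G]
    [IsSimpleGroup G]
    (hG : ∀ x : G, x ≠ 1 → x * x = 1 → Nat.card (Subgroup.centralizer {x}) = 8)
    {H : Subgroup G} (e : H ≃* DihedralGroup 4) : ¬ IsCoatom H := by
  intro hH
  let f : DihedralGroup 4 →* G := H.subtype.comp e.symm.toMonoidHom
  have hf : Function.Injective f := H.subtype_injective.comp e.symm.injective
  have hf_range : f.range = H := by
    rw [MonoidHom.range_comp, MonoidHom.range_eq_top.2 e.symm.surjective,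
      ← MonoidHom.range_eq_map, H.range_subtype]
  have hH_card : Nat.card H = 8 := by rw [Nat.card_congr e.toEquiv, DihedralGroup.nat_card]
  let v : G := f (.sr 0)
  have hv_one : v ≠ 1 := (map_ne_one_iff f hf).2 (by decide)
  have hv_mul_self : v * v = 1 := by rw [← map_mul, DihedralGroup.sr_mul_self, map_one]
  let K := Subgroup.centralizer {v}
  have hKH : K.relIndex H = 2 := by
    rw [← hf_range, ← Subgroup.index_comap, comap_centralizer_singleton hf,
      index_centralizer_sr_zero]
  have hHK : H.relIndex K = 2 := by
    rw [relIndex_comm_of_card_eq (hH_card.trans (hG v hv_one hv_mul_self).symm), hKH]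
  rcases (normal_inf_of_relIndex_eq_two hH hHK hKH).eq_bot_or_eq_top with h | h
  · rw [← Subgroup.inf_relIndex_left, h, Subgroup.relIndex_bot_left] at hKH
    omega
  · exact hH.1 (top_unique (h ▸ inf_le_left))

/-- The homomorphism out of a dihedral group determined by its values on the rotations and by an
involution inverting these values. -/
def dihedralLift {G : Type*} [Group G] {n : ℕ} (f : Multiplicative (ZMod n) →* G) (s : G)
    (hss : s * s = 1) (hsf : ∀ i, s * f i * s⁻¹ = (f i)⁻¹) : DihedralGroup n →* G where
  toFun
    | .r i => f (.ofAdd i)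
    | .sr i => s * f (.ofAdd i)
  map_one' := f.map_one
  map_mul' := by
    have hfs (i) : f i * s = s * (f i)⁻¹ := by
      rw [← hsf, inv_eq_of_mul_eq_one_left hss, ← mul_assoc, ← mul_assoc, hss, one_mul]
    have hsub (i j) : f (.ofAdd (j - i)) = (f (.ofAdd i))⁻¹ * f (.ofAdd j) := by
      rw [← map_inv, ← map_mul, ← ofAdd_neg, ← ofAdd_add, neg_add_eq_sub]
    rintro (i | i) (j | j)
    · exact f.map_mul _ _
    · change s * f (.ofAdd (j - i)) = f (.ofAdd i) * (s * f (.ofAdd j))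
      rw [hsub, ← mul_assoc, ← hfs, mul_assoc]
    · change s * f (.ofAdd (i + j)) = s * f (.ofAdd i) * f (.ofAdd j)
      rw [ofAdd_add, map_mul, mul_assoc]
    · change f (.ofAdd (j - i)) = s * f (.ofAdd i) * (s * f (.ofAdd j))
      rw [hsub, mul_assoc, ← mul_assoc (f _), hfs, ← mul_assoc, ← mul_assoc, hss, one_mul]

theorem nonempty_mulEquiv_dihedralGroup {G : Type*} [Group G] {C : Subgroup G} [IsCyclic C]
    (hC : C.index = 2) {s : G} (hs : s ∉ C) (hss : s * s = 1)
    (hsC : ∀ c ∈ C, s * c * s⁻¹ = c⁻¹) : Nonempty (G ≃* DihedralGroup (Nat.card C)) := by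
  let e := zmodCyclicMulEquiv (G := C) ‹_›
  let φ := dihedralLift (C.subtype.comp e.toMonoidHom) s hss fun i ↦ hsC _ (e i).2
  have hφ_injective : Function.Injective φ := by
    have hne (i j) : φ (.r i) ≠ φ (.sr j) := fun h ↦
      hs ((C.mul_mem_cancel_right (e j).2).1 (h ▸ (e i).2 : φ (.sr j) ∈ C))
    rintro (i | i) (j | j) h
    · exact congrArg DihedralGroup.r (e.injective (Subtype.ext h))
    · exact (hne i j h).elim
    · exact (hne j i h.symm).elim
    · exact congrArg DihedralGroup.sr (e.injective (Subtype.ext (mul_left_cancel h)))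
  have hφ_surjective : Function.Surjective φ := by
    intro g
    by_cases hg : g ∈ C
    · obtain ⟨i, hi⟩ := e.surjective ⟨g, hg⟩
      exact ⟨.r i, congrArg Subtype.val hi⟩
    · have hsg : s⁻¹ * g ∈ C :=
        (Subgroup.mul_mem_iff_of_index_two hC).2 (by simp [hs, hg])
      obtain ⟨i, hi⟩ := e.surjective ⟨s⁻¹ * g, hsg⟩
      exact ⟨.sr i, (congrArg (s * ·) (congrArg Subtype.val hi)).trans (mul_inv_cancel_left s g)⟩
  exact ⟨(MulEquiv.ofBijective φ ⟨hφ_injective, hφ_surjective⟩).symm⟩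

/-! ### Finite fields -/

theorem exists_mul_sq_add_mul_sq_eq {F : Type*} [Field F] [Finite F] {a b : F} (ha : a ≠ 0)
    (hb : b ≠ 0) (c : F) : ∃ x y : F, a * x ^ 2 + b * y ^ 2 = c := by
  have := Fintype.ofFinite F
  by_cases hF : ringChar F = 2
  · obtain ⟨x, hx⟩ := FiniteField.isSquare_of_char_two hF (c / a)
    exact ⟨x, 0, by rw [sq, ← hx]; field_simp; ring⟩
  · obtain ⟨x, y, hxy⟩ := FiniteField.exists_root_sum_quadratic
      (f := .C a * .X ^ 2 + .C 0 * .X + .C 0) (g := .C b * .X ^ 2 + .C 0 * .X + .C (-c))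
      (Polynomial.degree_quadratic ha) (Polynomial.degree_quadratic hb)
      (FiniteField.odd_card_of_char_ne_two hF)
    refine ⟨x, y, ?_⟩
    simp only [Polynomial.eval_add, Polynomial.eval_mul, Polynomial.eval_C, Polynomial.eval_pow,
      Polynomial.eval_X] at hxy
    linear_combination hxy

theorem two_ne_zero_iff_odd_card {F : Type*} [Field F] [Finite F] :
    (2 : F) ≠ 0 ↔ Odd (Nat.card F) := by
  have := Fintype.ofFinite F
  rw [Nat.card_eq_fintype_card, ← Nat.not_even_iff_odd, Nat.even_iff,
    ← FiniteField.even_card_iff_char_two]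
  refine ⟨fun h2 h ↦ h2 ?_, Ring.two_ne_zero⟩
  exact_mod_cast (ringChar.spec F 2).2 (dvd_of_eq h)

theorem two_ne_zero_of_not_isSquare_neg_one {R : Type*} [Ring R] (h : ¬ IsSquare (-1 : R)) :
    (2 : R) ≠ 0 := fun h2 ↦
  h ⟨1, by rw [mul_one, neg_eq_iff_add_eq_zero, one_add_one_eq_two, h2]⟩

theorem not_isSquare_neg_one_iff {F : Type*} [Field F] [Finite F] :
    ¬ IsSquare (-1 : F) ↔ Nat.card F % 4 = 3 := by
  have := Fintype.ofFinite F
  rw [FiniteField.isSquare_neg_one_iff, Nat.card_eq_fintype_card, not_ne_iff]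

/-! ### `SL₂` and `PSL₂` -/

theorem card_specialLinearGroup_mul_card_units (n R : Type*) [Fintype n] [DecidableEq n]
    [Nonempty n] [CommRing R] :
    Nat.card (Matrix.SpecialLinearGroup n R) * Nat.card Rˣ = Nat.card (GL n R) := by
  let det : GL n R →* Rˣ := Matrix.GeneralLinearGroup.det
  have hrange :
      (Matrix.SpecialLinearGroup.toGL : Matrix.SpecialLinearGroup n R →* GL n R).range = det.ker :=
    SetLike.coe_injective Matrix.SpecialLinearGroup.range_toGL
  rw [← det.ker.card_mul_index, Subgroup.index_ker,
    MonoidHom.range_eq_top.2 Matrix.GeneralLinearGroup.det_surjective, Subgroup.card_top, ← hrange,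
    ← Nat.card_congr (MonoidHom.ofInjective Matrix.SpecialLinearGroup.toGL_injective).toEquiv]

section SL2

variable {R : Type*} [CommRing R]

theorem sl2_ext {g h : SL(2, R)} (h00 : g 0 0 = h 0 0) (h01 : g 0 1 = h 0 1)
    (h10 : g 1 0 = h 1 0) (h11 : g 1 1 = h 1 1) : g = h := by
  ext i j
  fin_cases i <;> fin_cases j <;> assumption

theorem sl2_det_eq_one (g : SL(2, R)) : g 0 0 * g 1 1 - g 0 1 * g 1 0 = 1 := by
  rw [← Matrix.det_fin_two, g.det_coe]

theorem sl2_mul_apply (g h : SL(2, R)) (i j : Fin 2) :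
    (g * h) i j = g i 0 * h 0 j + g i 1 * h 1 j := by
  simp only [Matrix.SpecialLinearGroup.coe_mul, Matrix.mul_apply, Fin.sum_univ_two]

variable [NoZeroDivisors R]

theorem mem_center_sl2_iff {g : SL(2, R)} : g ∈ Subgroup.center SL(2, R) ↔ g = 1 ∨ g = -1 := by
  rw [Matrix.SpecialLinearGroup.mem_center_iff]
  constructor
  · rintro ⟨r, hr, hg⟩
    rw [Fintype.card_fin, sq_eq_one_iff] at hr
    rcases hr with rfl | rfl
    · exact .inl (Subtype.ext (by simpa using hg.symm))
    · exact .inr (Subtype.ext (by rw [← hg, map_neg, map_one]; rfl))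
  · rintro (rfl | rfl)
    · exact ⟨1, by simp, by simp⟩
    · exact ⟨-1, by simp, by rw [map_neg, map_one]; rfl⟩

theorem psl2_mk_eq_mk_iff {g h : SL(2, R)} : (g : PSL(2, R)) = h ↔ g = h ∨ g = -h := by
  rw [eq_comm, QuotientGroup.eq, mem_center_sl2_iff, inv_mul_eq_one, inv_mul_eq_iff_eq_mul,
    mul_neg_one, eq_comm]

theorem card_center_sl2 (h2 : (2 : R) ≠ 0) : Nat.card (Subgroup.center SL(2, R)) = 2 := by
  have hcenter : (Subgroup.center SL(2, R) : Set SL(2, R)) = {1, -1} :=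
    Set.ext fun _ ↦ mem_center_sl2_iff
  have hne : (1 : SL(2, R)) ≠ -1 := fun h ↦ h2 (by
    have : (1 : R) = -1 := by simpa using congrArg (fun g : SL(2, R) ↦ g 0 0) h
    linear_combination this)
  rw [← SetLike.coe_sort_coe, hcenter, Nat.card_coe_set_eq, Set.ncard_pair hne]

variable {F : Type*} [Field F] [Finite F]

theorem card_psl2 (h2 : (2 : F) ≠ 0) :
    Nat.card PSL(2, F) = (Nat.card F + 1) * (Nat.card F).choose 2 := by
  have := Fintype.ofFinite F
  obtain ⟨m, hm⟩ := two_ne_zero_iff_odd_card.1 h2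
  have hm0 : 0 < m := by have := Finite.one_lt_card (α := F); omega
  have hSL : Nat.card SL(2, F) = Nat.card PSL(2, F) * 2 := by
    rw [Subgroup.card_eq_card_quotient_mul_card_subgroup (Subgroup.center SL(2, F)),
      card_center_sl2 h2]
  have hGL : Nat.card (GL (Fin 2) F) = (2 * m * (2 * m + 2)) * ((2 * m + 1) * (2 * m)) := by
    rw [Matrix.card_GL_field, Fin.prod_univ_two, Fin.val_zero, Fin.val_one,
      Fintype.card_eq_nat_card, hm]
    congr 1 <;> exact Nat.sub_eq_of_eq_add (by ring)
  have hunits : Nat.card Fˣ = 2 * m := by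
    rw [Nat.card_units, hm, Nat.add_sub_cancel]
  have h := card_specialLinearGroup_mul_card_units (Fin 2) F
  rw [hSL, hGL, hunits] at h
  rw [hm, choose_two_two_mul_add_one]
  exact Nat.eq_of_mul_eq_mul_right (by omega : 0 < 2 * (2 * m)) (by linarith)

theorem index_eq_choose_two (h2 : (2 : F) ≠ 0) {H : Subgroup PSL(2, F)}
    (hH : Nat.card H = Nat.card F + 1) : H.index = (Nat.card F).choose 2 := by
  have h := H.card_mul_index
  rw [hH, card_psl2 h2] at h
  exact Nat.eq_of_mul_eq_mul_left (Nat.succ_pos _) h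

end SL2

/-! ### The centralizer of the quarter turn -/

section Rotations

variable {R : Type*} [CommRing R]

variable (R) in
/-- The rotation of the plane by a right angle, which squares to `-1` and thus represents an
involution of `PSL(2, R)`. -/
def quarterTurn : SL(2, R) := ⟨!![0, -1; 1, 0], by simp⟩

@[simp] theorem quarterTurn_zero_zero : quarterTurn R 0 0 = 0 := rfl

@[simp] theorem quarterTurn_zero_one : quarterTurn R 0 1 = -1 := rfl

@[simp] theorem quarterTurn_one_zero : quarterTurn R 1 0 = 1 := rfl

@[simp] theorem quarterTurn_one_one : quarterTurn R 1 1 = 0 := rfl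

theorem quarterTurn_mul_self : quarterTurn R * quarterTurn R = -1 := by
  apply sl2_ext <;> simp [sl2_mul_apply]

theorem mul_quarterTurn_eq_iff {g : SL(2, R)} :
    g * quarterTurn R = quarterTurn R * g ↔ g 1 1 = g 0 0 ∧ g 1 0 = -g 0 1 := by
  constructor
  · intro h
    have h00 := congrArg (fun g : SL(2, R) ↦ g 0 0) h
    have h01 := congrArg (fun g : SL(2, R) ↦ g 0 1) h
    simp only [sl2_mul_apply, quarterTurn_zero_zero, quarterTurn_zero_one, quarterTurn_one_zero,
      quarterTurn_one_one] at h00 h01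
    exact ⟨by linear_combination h01, by linear_combination h00⟩
  · rintro ⟨h11, h10⟩
    apply sl2_ext <;> simp [sl2_mul_apply, h11, h10]

theorem mul_quarterTurn_eq_neg_iff {g : SL(2, R)} :
    g * quarterTurn R = -(quarterTurn R * g) ↔ g 1 1 = -g 0 0 ∧ g 1 0 = g 0 1 := by
  constructor
  · intro h
    have h00 := congrArg (fun g : SL(2, R) ↦ g 0 0) h
    have h01 := congrArg (fun g : SL(2, R) ↦ g 0 1) h
    simp only [Matrix.SpecialLinearGroup.coe_neg, Matrix.neg_apply, sl2_mul_apply,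
      quarterTurn_zero_zero, quarterTurn_zero_one, quarterTurn_one_zero,
      quarterTurn_one_one] at h00 h01
    exact ⟨by linear_combination -h01, by linear_combination -h00⟩
  · rintro ⟨h11, h10⟩
    apply sl2_ext <;> simp [Matrix.mul_apply, h11, h10]

variable (R) in
/-- The group `SO(2, R)` of rotations, as the centralizer of the quarter turn. -/
def rotationSL : Subgroup SL(2, R) := Subgroup.centralizer {quarterTurn R}

variable (R) in
/-- The image of the group of rotations in `PSL(2, R)`: the cyclic part of the dihedral group. -/
def rotationPSL : Subgroup PSL(2, R) := (rotationSL R).map (QuotientGroup.mk' _)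

variable (R) in
/-- The centralizer of the quarter turn in `PSL(2, R)`. Over a finite field with `q` elements in
which `-1` is not a square, it is the dihedral group of order `q + 1`. -/
def quarterTurnCentralizer : Subgroup PSL(2, R) :=
  Subgroup.centralizer {(quarterTurn R : PSL(2, R))}

theorem mem_rotationSL_iff {g : SL(2, R)} :
    g ∈ rotationSL R ↔ g 1 1 = g 0 0 ∧ g 1 0 = -g 0 1 := by
  rw [rotationSL, Subgroup.mem_centralizer_singleton_iff, mul_quarterTurn_eq_iff]

theorem comap_mk_rotationPSL :
    (rotationPSL R).comap (QuotientGroup.mk' (Subgroup.center SL(2, R))) = rotationSL R := by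
  refine Subgroup.comap_map_eq_self ?_
  rw [QuotientGroup.ker_mk']
  exact Subgroup.center_le_centralizer _

theorem mk_mem_rotationPSL_iff {g : SL(2, R)} :
    (g : PSL(2, R)) ∈ rotationPSL R ↔ g ∈ rotationSL R := by
  rw [← comap_mk_rotationPSL]
  rfl

variable [NoZeroDivisors R]

theorem mk_mem_quarterTurnCentralizer_iff {g : SL(2, R)} :
    (g : PSL(2, R)) ∈ quarterTurnCentralizer R ↔
      g ∈ rotationSL R ∨ g * quarterTurn R = -(quarterTurn R * g) := by
  rw [quarterTurnCentralizer, Subgroup.mem_centralizer_singleton_iff, rotationSL,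
    Subgroup.mem_centralizer_singleton_iff, ← psl2_mk_eq_mk_iff]
  rfl

theorem rotationPSL_le_quarterTurnCentralizer : rotationPSL R ≤ quarterTurnCentralizer R := by
  intro x hx
  induction x using QuotientGroup.induction_on with
  | _ g => exact mk_mem_quarterTurnCentralizer_iff.2 (.inl (mk_mem_rotationPSL_iff.1 hx))

/-- The elements of `PSL(2, R)` that centralize the quarter turn without being rotations: they are
represented by the matrices anticommuting with the quarter turn. -/
def IsTwistedReflection (x : PSL(2, R)) : Prop :=
  x ∈ quarterTurnCentralizer R ∧ x ∉ rotationPSL R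

namespace IsTwistedReflection

variable {x y : PSL(2, R)}

theorem apply_eq {g : SL(2, R)} (hg : IsTwistedReflection (g : PSL(2, R))) :
    g 1 1 = -g 0 0 ∧ g 1 0 = g 0 1 :=
  mul_quarterTurn_eq_neg_iff.1 ((mk_mem_quarterTurnCentralizer_iff.1 hg.1).resolve_left
    fun h ↦ hg.2 (mk_mem_rotationPSL_iff.2 h))

theorem mul_self (hx : IsTwistedReflection x) : x * x = 1 := by
  induction x using QuotientGroup.induction_on with
  | _ g =>
    obtain ⟨h11, h10⟩ := hx.apply_eq
    have hdet := sl2_det_eq_one g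
    refine (psl2_mk_eq_mk_iff (g := g * g) (h := 1)).2 (.inr ?_)
    rw [h11, h10] at hdet
    apply sl2_ext <;> simp only [sl2_mul_apply, h11, h10, Matrix.SpecialLinearGroup.coe_neg,
      Matrix.SpecialLinearGroup.coe_one, Matrix.neg_apply, Matrix.one_apply_eq,
      Matrix.one_apply_ne zero_ne_one, Matrix.one_apply_ne one_ne_zero]
    · linear_combination -hdet
    · ring
    · ring
    · linear_combination -hdet

theorem mul_mem_rotationPSL (hx : IsTwistedReflection x) (hy : IsTwistedReflection y) :
    x * y ∈ rotationPSL R := by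
  induction x using QuotientGroup.induction_on with
  | _ g =>
  induction y using QuotientGroup.induction_on with
  | _ h =>
    obtain ⟨hg11, hg10⟩ := hx.apply_eq
    obtain ⟨hh11, hh10⟩ := hy.apply_eq
    refine (mk_mem_rotationPSL_iff (g := g * h)).2 (mem_rotationSL_iff.2 ?_)
    simp only [sl2_mul_apply, hg11, hg10, hh11, hh10]
    constructor <;> ring

theorem mul_rotation (hx : IsTwistedReflection x) (hy : y ∈ rotationPSL R) :
    IsTwistedReflection (x * y) :=
  ⟨mul_mem hx.1 (rotationPSL_le_quarterTurnCentralizer hy),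
    fun h ↦ hx.2 (((rotationPSL R).mul_mem_cancel_right hy).1 h)⟩

theorem conj_rotation (hx : IsTwistedReflection x) (hy : y ∈ rotationPSL R) :
    x * y * x⁻¹ = y⁻¹ := by
  rw [inv_eq_of_mul_eq_one_left hx.mul_self, eq_inv_iff_mul_eq_one, mul_assoc,
    (hx.mul_rotation hy).mul_self]

end IsTwistedReflection

theorem exists_isTwistedReflection {F : Type*} [Field F] [Finite F] (h2 : (2 : F) ≠ 0) :
    ∃ x : PSL(2, F), IsTwistedReflection x := by
  obtain ⟨a, b, hab⟩ := exists_mul_sq_add_mul_sq_eq one_ne_zero one_ne_zero (-1 : F)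
  let g : SL(2, F) := ⟨!![a, b; b, -a], by
    rw [Matrix.det_fin_two_of]
    linear_combination -hab⟩
  refine ⟨g, mk_mem_quarterTurnCentralizer_iff.2 (.inr (mul_quarterTurn_eq_neg_iff.2 ⟨rfl, rfl⟩)),
    fun h ↦ ?_⟩
  obtain ⟨ha, hb⟩ : -a = a ∧ b = -b := mem_rotationSL_iff.1 (mk_mem_rotationPSL_iff.1 h)
  have ha0 : a = 0 := (mul_eq_zero_iff_left h2).1 (by linear_combination -ha)
  have hb0 : b = 0 := (mul_eq_zero_iff_left h2).1 (by linear_combination hb)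
  simp [ha0, hb0] at hab

theorem relIndex_rotationPSL {F : Type*} [Field F] [Finite F] (h2 : (2 : F) ≠ 0) :
    (rotationPSL F).relIndex (quarterTurnCentralizer F) = 2 := by
  obtain ⟨s, hs⟩ := exists_isTwistedReflection h2
  rw [Subgroup.relIndex, Subgroup.index_eq_two_iff]
  refine ⟨⟨s, hs.1⟩, fun x ↦ ?_⟩
  simp only [Subgroup.mem_subgroupOf, Subgroup.coe_mul]
  by_cases hx : (x : PSL(2, F)) ∈ rotationPSL F
  · exact .inr ⟨hx, fun h ↦ hs.2 (((rotationPSL F).mul_mem_cancel_left hx).1 h)⟩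
  · exact .inl ⟨IsTwistedReflection.mul_mem_rotationPSL ⟨x.2, hx⟩ hs, hx⟩

theorem mem_rotationSL_of_commute {g u : SL(2, R)} (hg : g ∈ rotationSL R) (hg0 : g 0 1 ≠ 0)
    (hu : u * g = g * u) : u ∈ rotationSL R := by
  obtain ⟨h11, h10⟩ := mem_rotationSL_iff.1 hg
  have h00 := congrArg (fun g : SL(2, R) ↦ g 0 0) hu
  have h01 := congrArg (fun g : SL(2, R) ↦ g 0 1) hu
  simp only [sl2_mul_apply, h11, h10] at h00 h01
  exact mem_rotationSL_iff.2 ⟨mul_left_cancel₀ hg0 (by linear_combination -h01),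
    mul_left_cancel₀ hg0 (by linear_combination -h00)⟩

theorem eq_quarterTurn_or_eq_neg_of_mul_self (h2 : (2 : R) ≠ 0) {u : SL(2, R)}
    (hu : u ∈ rotationSL R) (huu : u * u = -1) : u = quarterTurn R ∨ u = -quarterTurn R := by
  obtain ⟨h11, h10⟩ := mem_rotationSL_iff.1 hu
  have hdet := sl2_det_eq_one u
  have h00 : (u * u) 0 0 = -1 := by simp [huu]
  rw [sl2_mul_apply, h10] at h00
  rw [h11, h10] at hdet
  have ha : u 0 0 = 0 := by
    have : 2 * u 0 0 ^ 2 = 0 := by linear_combination hdet + h00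
    simpa [h2] using this
  have hb : u 0 1 ^ 2 = 1 := by rw [ha] at hdet; linear_combination hdet
  rcases sq_eq_one_iff.1 hb with hb | hb
  · exact .inr (by apply sl2_ext <;> simp [h11, h10, ha, hb])
  · exact .inl (by apply sl2_ext <;> simp [h11, h10, ha, hb])

theorem mem_center_of_mem_rotationSL {g : SL(2, R)} (hg : g ∈ rotationSL R) (hg0 : g 0 1 = 0) :
    g ∈ Subgroup.center SL(2, R) := by
  obtain ⟨h11, h10⟩ := mem_rotationSL_iff.1 hg
  have hdet := sl2_det_eq_one g
  rw [h11, hg0, zero_mul, sub_zero, ← sq, sq_eq_one_iff] at hdet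
  rw [mem_center_sl2_iff]
  refine hdet.imp ?_ ?_ <;> intro h00 <;> apply sl2_ext <;> simp [h11, h10, h00, hg0]

theorem mem_quarterTurnCentralizer_of_conj_mem_rotationPSL (h2 : (2 : R) ≠ 0) {x y : PSL(2, R)}
    (hx : x ∈ rotationPSL R) (hx1 : x ≠ 1) (hxy : y⁻¹ * x * y ∈ rotationPSL R) :
    y ∈ quarterTurnCentralizer R := by
  induction x using QuotientGroup.induction_on with
  | _ g =>
  induction y using QuotientGroup.induction_on with
  | _ h =>
    have hg : g ∈ rotationSL R := mk_mem_rotationPSL_iff.1 hx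
    have hg0 : g 0 1 ≠ 0 := fun h0 ↦
      hx1 ((QuotientGroup.eq_one_iff g).2 (mem_center_of_mem_rotationSL hg h0))
    have hconj : h⁻¹ * g * h ∈ rotationSL R := mk_mem_rotationPSL_iff.1 hxy
    let u := MulAut.conj h (quarterTurn R)
    have hu : u ∈ rotationSL R := by
      refine mem_rotationSL_of_commute hg hg0 ?_
      have hcomm := Subgroup.mem_centralizer_singleton_iff.1 hconj
      have hconj_eq : MulAut.conj h (h⁻¹ * g * h) = g := by simp [mul_assoc]
      rw [← hconj_eq, ← map_mul, ← map_mul, hcomm]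
    have huu : u * u = -1 := by
      rw [← map_mul, quarterTurn_mul_self]
      simp
    have hu_eq := eq_quarterTurn_or_eq_neg_of_mul_self h2 hu huu
    simp only [u, MulAut.conj_apply] at hu_eq
    rw [mul_inv_eq_iff_eq_mul, mul_inv_eq_iff_eq_mul, neg_mul,
      ← psl2_mk_eq_mk_iff] at hu_eq
    exact Subgroup.mem_centralizer_singleton_iff.2 hu_eq

theorem sq_eq_one_of_conj_mem_quarterTurnCentralizer (h2 : (2 : R) ≠ 0) {x y : PSL(2, R)}
    (hy : y ∉ quarterTurnCentralizer R) (hx : x ∈ rotationPSL R)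
    (hxy : y⁻¹ * x * y ∈ quarterTurnCentralizer R) : x ^ 2 = 1 := by
  by_cases hrot : y⁻¹ * x * y ∈ rotationPSL R
  · have hx1 : x = 1 := by
      by_contra hx1
      exact hy (mem_quarterTurnCentralizer_of_conj_mem_rotationPSL h2 hx hx1 hrot)
    rw [hx1, one_pow]
  · have hsq := IsTwistedReflection.mul_self ⟨hxy, hrot⟩
    calc x ^ 2 = y * ((y⁻¹ * x * y) * (y⁻¹ * x * y)) * y⁻¹ := by rw [sq]; group
      _ = 1 := by rw [hsq]; group

end Rotations

section Cardinality

variable {R : Type*} [CommRing R] {F : Type*} [Field F] [Finite F]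

theorem fact_sq_ne_of_not_isSquare {a : R} (ha : ¬ IsSquare a) :
    Fact (∀ r : R, r ^ 2 ≠ a + 0 * r) :=
  ⟨fun r hr ↦ ha ⟨r, by linear_combination -hr⟩⟩

theorem quadraticAlgebra_norm_surjective {a : F} (ha : a ≠ 0) :
    Function.Surjective (QuadraticAlgebra.norm : QuadraticAlgebra F a 0 →* F) := by
  intro c
  obtain ⟨x, y, hxy⟩ := exists_mul_sq_add_mul_sq_eq one_ne_zero (neg_ne_zero.2 ha) c
  refine ⟨⟨x, y⟩, ?_⟩
  rw [QuadraticAlgebra.norm_def]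
  linear_combination hxy

theorem card_ker_units_map_norm {a : F} (ha : ¬ IsSquare a) :
    Nat.card (Units.map (QuadraticAlgebra.norm : QuadraticAlgebra F a 0 →* F)).ker =
      Nat.card F + 1 := by
  have ha0 : a ≠ 0 := by
    rintro rfl
    exact ha .zero
  have := fact_sq_ne_of_not_isSquare ha
  have : Finite (QuadraticAlgebra F a 0) := .of_equiv _ (QuadraticAlgebra.equivProd a 0).symm
  let N := Units.map (QuadraticAlgebra.norm : QuadraticAlgebra F a 0 →* F)
  have hN_surjective : Function.Surjective N := fun c ↦ by
    obtain ⟨z, hz⟩ := quadraticAlgebra_norm_surjective ha0 (c : F)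
    have hz_unit : IsUnit z := QuadraticAlgebra.isUnit_iff_norm_isUnit.2 (hz ▸ c.isUnit)
    exact ⟨hz_unit.unit, Units.ext hz⟩
  have hcard := N.ker.card_mul_index
  rw [Subgroup.index_ker, MonoidHom.range_eq_top.2 hN_surjective, Subgroup.card_top,
    Nat.card_units, Nat.card_units, Nat.card_congr (QuadraticAlgebra.equivProd a 0),
    Nat.card_prod] at hcard
  refine Nat.eq_of_mul_eq_mul_right (Nat.sub_pos_of_lt (Finite.one_lt_card (α := F)))
    (hcard.trans ?_)
  rw [← Nat.mul_self_sub_mul_self_eq, one_mul]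

/-- The identification of the rotation group with the norm-one elements of `R[√-1]`, which sends
a matrix with first column `(x, y)` to `x + y√-1`. -/
def rotationToQuadraticAlgebra : rotationSL R →* QuadraticAlgebra R (-1) 0 where
  toFun g := ⟨g.1 0 0, g.1 1 0⟩
  map_one' := by ext <;> rfl
  map_mul' g h := by
    obtain ⟨h11, h10⟩ := mem_rotationSL_iff.1 g.2
    ext
    · simp only [Subgroup.coe_mul, sl2_mul_apply, QuadraticAlgebra.re_mul, h10]
      ring
    · simp only [Subgroup.coe_mul, sl2_mul_apply, QuadraticAlgebra.im_mul, h11]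
      ring

theorem rotationToQuadraticAlgebra_injective :
    Function.Injective (rotationToQuadraticAlgebra (R := R)) := by
  intro g h hgh
  obtain ⟨hg11, hg10⟩ := mem_rotationSL_iff.1 g.2
  obtain ⟨hh11, hh10⟩ := mem_rotationSL_iff.1 h.2
  have h00 : g.1 0 0 = h.1 0 0 := congrArg QuadraticAlgebra.re hgh
  have h10 : g.1 1 0 = h.1 1 0 := congrArg QuadraticAlgebra.im hgh
  refine Subtype.ext (sl2_ext h00 ?_ h10 (by rw [hg11, hh11, h00]))
  exact neg_injective (by rw [← hg10, ← hh10, h10])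

theorem exists_rotationToQuadraticAlgebra_eq_iff {z : QuadraticAlgebra R (-1) 0} :
    (∃ g, rotationToQuadraticAlgebra g = z) ↔ QuadraticAlgebra.norm z = 1 := by
  rw [QuadraticAlgebra.norm_def]
  constructor
  · rintro ⟨g, rfl⟩
    obtain ⟨h11, h10⟩ := mem_rotationSL_iff.1 g.2
    have hdet := sl2_det_eq_one g.1
    simp only [rotationToQuadraticAlgebra, MonoidHom.coe_mk, OneHom.coe_mk]
    rw [h11] at hdet
    linear_combination hdet + g.1 1 0 * h10
  · intro hz
    let g : SL(2, R) := ⟨!![z.re, -z.im; z.im, z.re], by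
      rw [Matrix.det_fin_two_of]
      linear_combination hz⟩
    exact ⟨⟨g, mem_rotationSL_iff.2 ⟨rfl, (neg_neg _).symm⟩⟩, rfl⟩

theorem isCyclic_rotationSL (h : ¬ IsSquare (-1 : F)) : IsCyclic (rotationSL F) :=
  have := fact_sq_ne_of_not_isSquare h
  isCyclic_of_injective_ringHom rotationToQuadraticAlgebra rotationToQuadraticAlgebra_injective

theorem isCyclic_rotationPSL (h : ¬ IsSquare (-1 : F)) : IsCyclic (rotationPSL F) :=
  have := isCyclic_rotationSL h
  isCyclic_of_surjective _ ((QuotientGroup.mk' _).subgroupMap_surjective (rotationSL F))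

theorem card_rotationSL (h : ¬ IsSquare (-1 : F)) :
    Nat.card (rotationSL F) = Nat.card F + 1 := by
  let f : rotationSL F →* (QuadraticAlgebra F (-1 : F) 0)ˣ := rotationToQuadraticAlgebra.toHomUnits
  have hf_injective : Function.Injective f := fun g h hgh ↦
    rotationToQuadraticAlgebra_injective (congrArg Units.val hgh)
  have hf_range : f.range = (Units.map QuadraticAlgebra.norm).ker := by
    ext z
    simp only [MonoidHom.mem_range, MonoidHom.mem_ker, Units.ext_iff]
    exact exists_rotationToQuadraticAlgebra_eq_iff
  rw [Nat.card_congr (MonoidHom.ofInjective hf_injective).toEquiv, hf_range,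
    card_ker_units_map_norm h]

theorem card_rotationPSL (h : ¬ IsSquare (-1 : F)) :
    Nat.card (rotationPSL F) * 2 = Nat.card F + 1 := by
  have hcard := QuotientGroup.card_preimage_mk _ (rotationPSL F : Set PSL(2, F))
  rw [card_center_sl2 (two_ne_zero_of_not_isSquare_neg_one h), mul_comm] at hcard
  rw [← card_rotationSL h, ← comap_mk_rotationPSL]
  exact hcard.symm

theorem card_quarterTurnCentralizer (h : ¬ IsSquare (-1 : F)) :
    Nat.card (quarterTurnCentralizer F) = Nat.card F + 1 := by
  have hcard := Subgroup.relIndex_mul_relIndex _ _ _ bot_le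
    (rotationPSL_le_quarterTurnCentralizer (R := F))
  rwa [Subgroup.relIndex_bot_left, Subgroup.relIndex_bot_left,
    relIndex_rotationPSL (two_ne_zero_of_not_isSquare_neg_one h), card_rotationPSL h,
    eq_comm] at hcard

theorem nonempty_quarterTurnCentralizer_mulEquiv (h : ¬ IsSquare (-1 : F)) :
    Nonempty (quarterTurnCentralizer F ≃* DihedralGroup ((Nat.card F + 1) / 2)) := by
  let C := (rotationPSL F).subgroupOf (quarterTurnCentralizer F)
  let e : C ≃* rotationPSL F := Subgroup.subgroupOfEquivOfLe rotationPSL_le_quarterTurnCentralizer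
  have := isCyclic_rotationPSL h
  have : IsCyclic C := isCyclic_of_injective e.toMonoidHom e.injective
  have h2 := two_ne_zero_of_not_isSquare_neg_one h
  obtain ⟨s, hs⟩ := exists_isTwistedReflection h2
  have hC : Nat.card C = (Nat.card F + 1) / 2 := by
    rw [Nat.card_congr e.toEquiv]
    have := card_rotationPSL h
    omega
  rw [← hC]
  exact nonempty_mulEquiv_dihedralGroup (relIndex_rotationPSL h2) (s := ⟨s, hs.1⟩) hs.2
    (Subtype.ext hs.mul_self) fun c hc ↦ Subtype.ext (hs.conj_rotation hc)

end Cardinality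

/-! ### Involutions of `PSL₂` -/

section Involutions

variable {R : Type*} [CommRing R]

theorem mul_self_eq_neg_one_of_psl2_mul_self [NoZeroDivisors R] (h2 : (2 : R) ≠ 0) {g : SL(2, R)}
    (hg : (g : PSL(2, R)) ≠ 1) (hgg : (g : PSL(2, R)) * g = 1) : g * g = -1 := by
  refine ((psl2_mk_eq_mk_iff (g := g * g) (h := 1)).1 hgg).resolve_left fun hone ↦ hg ?_
  have hinv : g⁻¹ = g := inv_eq_of_mul_eq_one_left hone
  have hentry (i j : Fin 2) : (g⁻¹) i j = g i j := by rw [hinv]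
  simp only [Matrix.SpecialLinearGroup.coe_inv, Matrix.adjugate_fin_two] at hentry
  have h01 : g 0 1 = 0 := by
    have : -g 0 1 = g 0 1 := hentry 0 1
    exact (mul_eq_zero_iff_left h2).1 (by linear_combination -this)
  have h10 : g 1 0 = 0 := by
    have : -g 1 0 = g 1 0 := hentry 1 0
    exact (mul_eq_zero_iff_left h2).1 (by linear_combination -this)
  have h11 : g 1 1 = g 0 0 := hentry 0 0
  refine (QuotientGroup.eq_one_iff g).2 (mem_center_of_mem_rotationSL ?_ h01)
  exact mem_rotationSL_iff.2 ⟨h11, by rw [h01, h10, neg_zero]⟩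

theorem apply_one_one_of_mul_self_eq_neg_one {g : SL(2, R)} (hg : g * g = -1) :
    g 1 1 = -g 0 0 := by
  have hinv : g⁻¹ = -g := inv_eq_of_mul_eq_one_left (by rw [neg_mul, hg, neg_neg])
  have h00 : (g⁻¹) 0 0 = -g 0 0 := by rw [hinv]; rfl
  simpa [Matrix.SpecialLinearGroup.coe_inv, Matrix.adjugate_fin_two] using h00

variable {F : Type*} [Field F] [Finite F]

theorem isConj_quarterTurn_of_mul_self_eq_neg_one (h : ¬ IsSquare (-1 : F))
    {g : SL(2, F)} (hg : g * g = -1) : IsConj (quarterTurn F) g := by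
  have h11 := apply_one_one_of_mul_self_eq_neg_one hg
  have hdet := sl2_det_eq_one g
  rw [h11] at hdet
  have h10 : g 1 0 ≠ 0 := fun h10 ↦
    h ⟨g 0 0, by rw [h10] at hdet; linear_combination hdet⟩
  -- The columns of the conjugating matrix are `v = (x, y)` and `g v`.
  obtain ⟨x, y, hxy⟩ : ∃ x y : F, g 1 0 * x ^ 2 - 2 * g 0 0 * x * y - g 0 1 * y ^ 2 = 1 := by
    obtain ⟨x, y, hxy⟩ := exists_mul_sq_add_mul_sq_eq h10 (inv_ne_zero h10) (1 : F)
    refine ⟨x + g 0 0 / g 1 0 * y, y, ?_⟩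
    field_simp at hxy ⊢
    linear_combination hxy + y ^ 2 * hdet
  let p : SL(2, F) := ⟨!![x, g 0 0 * x + g 0 1 * y; y, g 1 0 * x - g 0 0 * y], by
    rw [Matrix.det_fin_two_of]
    linear_combination hxy⟩
  have hp00 : p 0 0 = x := rfl
  have hp01 : p 0 1 = g 0 0 * x + g 0 1 * y := rfl
  have hp10 : p 1 0 = y := rfl
  have hp11 : p 1 1 = g 1 0 * x - g 0 0 * y := rfl
  refine isConj_iff.2 ⟨p, mul_inv_eq_iff_eq_mul.2 ?_⟩
  apply sl2_ext <;> simp only [sl2_mul_apply, quarterTurn_zero_zero, quarterTurn_zero_one,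
    quarterTurn_one_zero, quarterTurn_one_one, hp00, hp01, hp10, hp11, h11]
  · ring
  · linear_combination x * hdet
  · ring
  · linear_combination y * hdet

theorem isConj_quarterTurn_of_mul_self_eq_one (h : ¬ IsSquare (-1 : F))
    {x : PSL(2, F)} (hx : x ≠ 1) (hxx : x * x = 1) : IsConj (quarterTurn F : PSL(2, F)) x := by
  induction x using QuotientGroup.induction_on with
  | _ g =>
    exact (QuotientGroup.mk' _).map_isConj (isConj_quarterTurn_of_mul_self_eq_neg_one h
      (mul_self_eq_neg_one_of_psl2_mul_self (two_ne_zero_of_not_isSquare_neg_one h) hx hxx))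

theorem card_centralizer_of_mul_self_eq_one (h : ¬ IsSquare (-1 : F))
    {x : PSL(2, F)} (hx : x ≠ 1) (hxx : x * x = 1) :
    Nat.card (Subgroup.centralizer {x}) = Nat.card F + 1 := by
  obtain ⟨y, rfl⟩ := isConj_iff.1 (isConj_quarterTurn_of_mul_self_eq_one h hx hxx)
  rw [← MulAut.conj_apply, card_centralizer_apply_mulEquiv, ← card_quarterTurnCentralizer h]
  rfl

end Involutions

section Main

variable {F : Type*} [Field F] [Finite F]

theorem isCoatom_quarterTurnCentralizer (h : ¬ IsSquare (-1 : F)) (hF7 : 7 < Nat.card F) :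
    IsCoatom (quarterTurnCentralizer F) := by
  have : Finite PSL(2, F) := Quotient.finite _
  have := isCyclic_rotationPSL h
  have h2 := two_ne_zero_of_not_isSquare_neg_one h
  have hF_card := not_isSquare_neg_one_iff.1 h
  obtain ⟨k, hk⟩ : ∃ k, Nat.card F + 1 = 4 * k := ⟨(Nat.card F + 1) / 4, by omega⟩
  have hF_primePow : IsPrimePow (Nat.card F) := by
    have := Fintype.ofFinite F
    exact Nat.card_eq_fintype_card (α := F) ▸ FiniteField.isPrimePow_card F
  have hindex := index_eq_choose_two h2 (card_quarterTurnCentralizer h)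
  refine ⟨fun htop ↦ ?_, fun M hM ↦ ?_⟩
  · rw [← Subgroup.index_eq_one, hindex, Nat.choose_eq_one_iff] at htop
    omega
  · have : (quarterTurnCentralizer F).IsFiniteRelIndex M :=
      Subgroup.isFiniteRelIndex_of_finiteIndex
    have hmod : (quarterTurnCentralizer F).relIndex M ≡ 1 [MOD k] :=
      relIndex_modEq_one_of_isCyclic rotationPSL_le_quarterTurnCentralizer hM.le
        (by have := card_rotationPSL h; omega)
        fun y hy x ↦ sq_eq_one_of_conj_mem_quarterTurnCentralizer h2 hy
    have hmul : (quarterTurnCentralizer F).relIndex M * M.index = (Nat.card F).choose 2 := by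
      rw [Subgroup.relIndex_mul_index hM.le, hindex]
    rcases eq_one_or_eq_one_of_mul_eq_choose_two hF_primePow hF7 hk hmul hmod with hM_eq | hM_eq
    · exact absurd (Subgroup.relIndex_eq_one.1 hM_eq) hM.not_ge
    · exact Subgroup.index_eq_one.1 hM_eq

theorem not_isCoatom_of_card_eq_seven (hF : Nat.card F = 7) {H : Subgroup PSL(2, F)}
    (e : H ≃* DihedralGroup 4) : ¬ IsCoatom H := by
  have h : ¬ IsSquare (-1 : F) := not_isSquare_neg_one_iff.2 (by rw [hF])
  have := Matrix.ProjectiveSpecialLinearGroup.rank_two_simple (F := F) (by omega)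
  have : Finite PSL(2, F) := Quotient.finite _
  refine not_isCoatom_of_mulEquiv_dihedralGroup_four (fun x hx hxx ↦ ?_) e
  rw [card_centralizer_of_mul_self_eq_one h hx hxx, hF]

end Main

/-- `PSL₂(F)` for `F` a finite field of odd prime-power order `q ≥ 5` has a
maximal subgroup of odd index isomorphic to the dihedral group of order `q + 1`
(i.e. `DihedralGroup ((q+1)/2)`) iff `q > 7` and `q ≡ 3 (mod 4)`. -/
theorem psl2_maximal_odd_index_dihedral (q : ℕ) (hq_odd : Odd q) (hq_pp : IsPrimePow q)
    (hq5 : 5 ≤ q) (F : Type) [Field F] [Fintype F] (hF : Fintype.card F = q) :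
    (∃ H : Subgroup (Matrix.ProjectiveSpecialLinearGroup (Fin 2) F),
        IsCoatom H ∧ Odd H.index ∧ Nonempty (H ≃* DihedralGroup ((q + 1) / 2))) ↔
      7 < q ∧ q % 4 = 3 := by
  rw [Fintype.card_eq_nat_card] at hF
  subst hF
  have h2 : (2 : F) ≠ 0 := two_ne_zero_iff_odd_card.2 hq_odd
  have hodd {H : Subgroup PSL(2, F)} (hH : Nat.card H = Nat.card F + 1) :
      Odd H.index ↔ Nat.card F % 4 = 3 := by
    rw [index_eq_choose_two h2 hH, odd_choose_two_iff hq_odd]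
  constructor
  · rintro ⟨H, hH, hH_index, ⟨e⟩⟩
    have hmod : Nat.card F % 4 = 3 := (hodd (by
      rw [Nat.card_congr e.toEquiv, DihedralGroup.nat_card, Nat.two_mul_div_two_of_even
        hq_odd.add_one])).1 hH_index
    have hne7 : Nat.card F ≠ 7 := fun hF7 ↦ not_isCoatom_of_card_eq_seven hF7
      (by rwa [hF7] at e) hH
    exact ⟨by omega, hmod⟩
  · rintro ⟨hF7, hmod⟩
    have h := not_isSquare_neg_one_iff.2 hmod
    exact ⟨quarterTurnCentralizer F, isCoatom_quarterTurnCentralizer h hF7,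
      (hodd (card_quarterTurnCentralizer h)).2 hmod, nonempty_quarterTurnCentralizer_mulEquiv h⟩
end

section
/- Let q₀ be an odd prime power, F₀ a finite field with q₀ elements, and F a finite field with q₀² elements. Then PSL₂(F) has a maximal subgroup H of odd index such that H is isomorphic to PGL₂(F₀). -/
/-- The projective general linear group `PGL(n, R)`: the quotient of `GL(n, R)` by its
center. -/
def ProjectiveGeneralLinearGroup (n : Type*) [DecidableEq n] [Fintype n]
    (R : Type*) [CommRing R] : Type _ :=
  Matrix.GeneralLinearGroup n R ⧸ Subgroup.center (Matrix.GeneralLinearGroup n R)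

noncomputable instance (n : Type*) [DecidableEq n] [Fintype n] (R : Type*) [CommRing R] :
    Group (ProjectiveGeneralLinearGroup n R) :=
  QuotientGroup.Quotient.group _

/-!
Let `K ⊆ L` be the finite fields with `q` and `q²` elements, `q` odd. The subgroup is
`PSL₂(L) ∩ PGL₂(K)`, computed inside `PGL₂(L)`: the classes of matrices proportional to a matrix
over `K`. Every element of `K` is a square in `L`, so `PGL₂(K) ≤ PSL₂(L)` and the intersection is
all of `PGL₂(K)`; comparing orders, its index is `q (q² + 1) / 2`, which is odd.

For maximality, let `G ≤ SL₂(L)` contain all matrices proportional to one over `K`, and a further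
matrix `A`. Some `K`-rational point of the projective line, which may be taken to be the image of
`∞` under an element of `G` over `K`, is sent by `A` to a point `x ∉ K`; so some `M ∈ G` sends `∞`
to `x`. Multiplication by `y ∈ L` in the `K`-basis `x, 1` of `L`, scaled to determinant one, gives
`C ∈ G` with eigenvector `(x, 1)`, and `y` can be chosen so that the eigenvalue `s` has `s² ∉ K`.
Then `M⁻¹ C M ∈ G` is upper triangular and conjugates the transvection with entry `1` to the one
with entry `s²`. Together with the diagonal matrices `diag(√a, 1/√a)` for `a ∈ K`, this yields all
upper transvections, then by the Weyl element all lower ones, and these generate `SL₂(L)`.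
-/

open Matrix hiding transvection
open Matrix.SpecialLinearGroup (transvection transvection_coe transvection_add diag2 diag2_coe')
open scoped MatrixGroups

section ProjectiveGroups

variable {n R S : Type*} [Fintype n] [DecidableEq n] [CommRing R] [CommRing S]

lemma projGenLinGroupMap_injective {f : R →+* S} (hf : Function.Injective f) :
    Function.Injective (ProjGenLinGroup.map (n := n) f) := by
  have hGL : Function.Injective (GeneralLinearGroup.map (n := n) f) := fun A B h ↦
    Units.ext (Matrix.map_injective hf (congrArg Units.val h))
  rw [injective_iff_map_eq_one]
  intro g hg
  induction g using ProjGenLinGroup.induction_on with | mk A =>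
  rw [ProjGenLinGroup.map_mk, ProjGenLinGroup.mk_eq_one, Subgroup.mem_center_iff] at hg
  rw [ProjGenLinGroup.mk_eq_one, Subgroup.mem_center_iff]
  exact fun B ↦ hGL (by simpa only [map_mul] using hg (GeneralLinearGroup.map f B))

lemma mk_mem_range_toPGL_of_pow_eq_det {A : GL n R} {r : Rˣ} (hr : r ^ Fintype.card n = A.det) :
    ProjGenLinGroup.mk A ∈ (ProjectiveSpecialLinearGroup.toPGL (n := n) (R := R)).range := by
  obtain ⟨B, hB⟩ : ∃ B : Matrix.SpecialLinearGroup n R, B.1 = (r⁻¹).1 • A.1 := by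
    refine ⟨⟨_, ?_⟩, rfl⟩
    rw [det_smul, ← GeneralLinearGroup.val_det_apply, ← hr, ← Units.val_pow_eq_pow_val,
      ← Units.val_mul, inv_pow, inv_mul_cancel, Units.val_one]
  refine ⟨B, ?_⟩
  rw [ProjectiveSpecialLinearGroup.toPGL_mk, ProjGenLinGroup.mk_eq_mk_iff]
  refine ⟨r, Units.ext ?_⟩
  ext i j
  simp [hB, mul_comm]

/-- The elements of `PSL(n, S)` whose image in `PGL(n, S)` comes from `PGL(n, R)`. When `f` is an
inclusion of fields these are the classes of matrices proportional to a matrix over `R`. -/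
def baseRingPSL (n : Type*) [Fintype n] [DecidableEq n] (f : R →+* S) :
    Subgroup (ProjectiveSpecialLinearGroup n S) :=
  (ProjGenLinGroup.map f).range.comap ProjectiveSpecialLinearGroup.toPGL

lemma nonempty_baseRingPSL_mulEquiv {f : R →+* S} (hf : Function.Injective f)
    (hroot : ∀ u : Rˣ, ∃ r : Sˣ, r ^ Fintype.card n = Units.map f u) :
    Nonempty (baseRingPSL n f ≃* PGL(n, R)) := by
  have hrange : (ProjGenLinGroup.map (n := n) f).range ≤
      ProjectiveSpecialLinearGroup.toPGL.range := by
    rintro _ ⟨g, rfl⟩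
    induction g using ProjGenLinGroup.induction_on with | mk A =>
    obtain ⟨r, hr⟩ := hroot A.det
    exact mk_mem_range_toPGL_of_pow_eq_det (hr.trans (GeneralLinearGroup.map_det f A).symm)
  have hmap : (baseRingPSL n f).map ProjectiveSpecialLinearGroup.toPGL =
      (ProjGenLinGroup.map f).range := Subgroup.map_comap_eq_self hrange
  exact ⟨((baseRingPSL n f).equivMapOfInjective _
    ProjectiveSpecialLinearGroup.toPGL_injective).trans <|
      (MulEquiv.subgroupCongr hmap).trans
        (MonoidHom.ofInjective (projGenLinGroupMap_injective hf)).symm⟩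

end ProjectiveGroups

/-- A matrix over a field is projectively defined over a subfield `k` if some nonzero scalar
multiple of it has all its entries in `k`. -/
def IsProjectivelyDefinedOver {m n F : Type*} [Field F] (k : Subfield F) (A : Matrix m n F) :
    Prop :=
  ∃ c : F, c ≠ 0 ∧ ∀ i j, c * A i j ∈ k

section BaseField

variable {n K L : Type*} [Fintype n] [DecidableEq n] [Field K] [Field L] {f : K →+* L}

lemma mk_mem_range_map_iff {A : GL n L} :
    ProjGenLinGroup.mk A ∈ (ProjGenLinGroup.map (n := n) f).range ↔
      IsProjectivelyDefinedOver f.fieldRange A.1 := by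
  constructor
  · rintro ⟨g, hg⟩
    induction g using ProjGenLinGroup.induction_on with | mk B =>
    rw [ProjGenLinGroup.map_mk, ProjGenLinGroup.mk_eq_mk_iff] at hg
    obtain ⟨u, rfl⟩ := hg
    refine ⟨(u⁻¹ : Lˣ), Units.ne_zero _, fun i j ↦ ⟨B i j, ?_⟩⟩
    simp [mul_comm]
  · rintro ⟨c, hc, hA⟩
    choose M hM using hA
    have hmap : (Matrix.of M).map f = c • A.1 := Matrix.ext hM
    have hdet : (Matrix.of M).det ≠ 0 := by
      rw [← map_ne_zero f, f.map_det, RingHom.mapMatrix_apply, hmap, det_smul]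
      exact mul_ne_zero (pow_ne_zero _ hc) A.det_ne_zero
    refine ⟨.mk (.mkOfDetNeZero _ hdet), Eq.symm ?_⟩
    rw [ProjGenLinGroup.map_mk, ProjGenLinGroup.mk_eq_mk_iff]
    refine ⟨Units.mk0 c hc, Units.ext ?_⟩
    ext i j
    simpa [mul_comm] using (hM i j).symm

lemma mk_mem_baseRingPSL_iff {A : Matrix.SpecialLinearGroup n L} :
    (A : ProjectiveSpecialLinearGroup n L) ∈ baseRingPSL n f ↔
      IsProjectivelyDefinedOver f.fieldRange A.1 :=
  mk_mem_range_map_iff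

end BaseField

section Maximality

variable {F : Type*} [Field F] {k : Subfield F}

lemma exists_mul_add_eq_of_notMem [Algebra.IsQuadraticExtension k F] {x : F} (hx : x ∉ k) (y : F) :
    ∃ a ∈ k, ∃ b ∈ k, a * x + b = y := by
  have hindep : LinearIndependent k ![x, 1] := by
    refine LinearIndependent.pair_iff.2 fun a b hab ↦ ?_
    have hab : (a : F) * x + b = 0 := by simpa [Subfield.smul_def] using hab
    have ha : a = 0 := by
      by_contra ha
      have ha' : (a : F) ≠ 0 := by simpa using ha
      have hx' : x = -b / a := by
        rw [eq_div_iff ha']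
        linear_combination hab
      exact hx (hx' ▸ div_mem (neg_mem b.2) a.2)
    subst ha
    simpa using hab
  have hspan := hindep.span_eq_top_of_card_eq_finrank
    (by rw [Fintype.card_fin, Algebra.IsQuadraticExtension.finrank_eq_two])
  rw [Matrix.range_cons_cons_empty] at hspan
  obtain ⟨a, b, hab⟩ := Submodule.mem_span_pair.1 (hspan ▸ Submodule.mem_top : y ∈ _)
  exact ⟨a, a.2, b, b.2, by simpa [Subfield.smul_def] using hab⟩

lemma exists_sq_notMem (h2 : (2 : F) ≠ 0) {x : F} (hx : x ∉ k) : ∃ y : F, y ^ 2 ∉ k := by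
  by_contra! hsq
  have htwo : 2 * x ∈ k := by
    have := sub_mem (sub_mem (hsq (x + 1)) (hsq x)) (one_mem k)
    ring_nf at this ⊢
    exact this
  refine hx ?_
  rw [← mul_div_cancel_left₀ x h2]
  exact div_mem htwo (ofNat_mem k 2)

namespace IsProjectivelyDefinedOver

lemma of_forall_mem {m n : Type*} {A : Matrix m n F} (hA : ∀ i j, A i j ∈ k) :
    IsProjectivelyDefinedOver k A :=
  ⟨1, one_ne_zero, by simpa only [one_mul] using hA⟩

-- Multiplying `det A` by `r * t` and by `s * t` lands in `k`, so `r / s ∈ k`.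
lemma of_columns {A : Matrix (Fin 2) (Fin 2) F} (hA : A.det ≠ 0) {r s t : F}
    (hr : r ≠ 0) (hs : s ≠ 0) (ht : t ≠ 0)
    (h0 : ∀ i, r * A i 0 ∈ k) (h1 : ∀ i, s * A i 1 ∈ k) (h01 : ∀ i, t * (A i 0 + A i 1) ∈ k) :
    IsProjectivelyDefinedOver k A := by
  have hrt : r * t * A.det ∈ k := by
    convert sub_mem (mul_mem (h0 0) (h01 1)) (mul_mem (h01 0) (h0 1)) using 1
    rw [det_fin_two]
    ring
  have hst : s * t * A.det ∈ k := by
    convert sub_mem (mul_mem (h01 0) (h1 1)) (mul_mem (h1 0) (h01 1)) using 1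
    rw [det_fin_two]
    ring
  refine ⟨r, hr, fun i j ↦ ?_⟩
  fin_cases j
  · exact h0 i
  · convert mul_mem (div_mem hrt hst) (h1 i) using 1
    simp only [Fin.mk_one]
    field_simp

end IsProjectivelyDefinedOver

/-- The standard representative of the nontrivial element of the Weyl group of `SL(2)`; conjugation
by it exchanges upper and lower triangular matrices. -/
def weylElement (R : Type*) [CommRing R] : SL(2, R) := ⟨!![0, -1; 1, 0], by simp⟩

lemma coe_weylElement (R : Type*) [CommRing R] : (weylElement R).1 = !![0, -1; 1, 0] := rfl

-- The point at infinity `u 1 = 0` is covered by the hypothesis because `x / 0 = 0`.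
lemma exists_mul_mem_of_div_mem {u : Fin 2 → F} (hu : u ≠ 0) (h : u 0 / u 1 ∈ k) :
    ∃ c : F, c ≠ 0 ∧ ∀ i, c * u i ∈ k := by
  by_cases h1 : u 1 = 0
  · have h0 : u 0 ≠ 0 := fun h0 ↦ hu (funext (Fin.forall_fin_two.2 ⟨h0, h1⟩))
    exact ⟨(u 0)⁻¹, inv_ne_zero h0, Fin.forall_fin_two.2 (by simp [h0, h1])⟩
  · refine ⟨(u 1)⁻¹, inv_ne_zero h1, Fin.forall_fin_two.2 ⟨?_, ?_⟩⟩
    · rwa [inv_mul_eq_div]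
    · simp [h1]

lemma exists_div_notMem_of_not_isProjectivelyDefinedOver {A : SL(2, F)}
    (hA : ¬ IsProjectivelyDefinedOver k A.1) :
    ∃ B : SL(2, F), IsProjectivelyDefinedOver k B.1 ∧ (A * B) 0 0 / (A * B) 1 0 ∉ k := by
  by_contra! hB
  have hcol (B : SL(2, F)) (hBk : ∀ i j, B i j ∈ k) :
      ∃ c : F, c ≠ 0 ∧ ∀ i, c * (A * B) i 0 ∈ k := by
    refine exists_mul_mem_of_div_mem (u := fun i ↦ (A * B) i 0) (fun h0 ↦ ?_)
      (hB B (.of_forall_mem hBk))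
    exact (A * B).det_ne_zero (det_eq_zero_of_column_eq_zero 0 (congrFun h0))
  obtain ⟨r, hr, h0⟩ := hcol 1 <| by simp [Fin.forall_fin_two]
  obtain ⟨s, hs, h1⟩ := hcol (weylElement F) <| by
    simp [coe_weylElement, Fin.forall_fin_two]
  obtain ⟨t, ht, h01⟩ := hcol (transvection one_ne_zero 1) <| by
    simp [transvection_coe, Fin.forall_fin_two]
  refine hA (.of_columns A.det_ne_zero hr hs ht ?_ ?_ ?_)
  · simpa using h0
  · simpa [Matrix.mul_apply, coe_weylElement] using h1
  · simpa [Matrix.mul_apply, transvection_coe] using h01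

lemma exists_mulVec_eq_smul [Algebra.IsQuadraticExtension k F] (h2 : (2 : F) ≠ 0)
    (hsq : ∀ a ∈ k, IsSquare a) {x : F} (hx : x ∉ k) :
    ∃ B : SL(2, F), IsProjectivelyDefinedOver k B.1 ∧
      ∃ s : F, s ^ 2 ∉ k ∧ B.1 *ᵥ ![x, 1] = s • ![x, 1] := by
  -- Multiplication by `y` on `F` has a matrix over `k` in the basis `![x, 1]`.
  obtain ⟨y, hy⟩ := exists_sq_notMem h2 hx
  obtain ⟨a, ha, b, hb, hab⟩ := exists_mul_add_eq_of_notMem hx (y * x)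
  obtain ⟨c, hc, d, hd, hcd⟩ := exists_mul_add_eq_of_notMem hx y
  have hdet_mem : a * d - b * c ∈ k := sub_mem (mul_mem ha hd) (mul_mem hb hc)
  have hdet : a * d - b * c = y * (a + d - y) := by
    have hx0 : x ≠ 0 := fun h ↦ hx (h ▸ zero_mem k)
    refine mul_left_cancel₀ hx0 ?_
    linear_combination (d - y) * hab - b * hcd
  have hdet_ne : a * d - b * c ≠ 0 := by
    have hyk : y ∉ k := fun h ↦ hy (pow_mem h 2)
    rw [hdet, mul_ne_zero_iff, sub_ne_zero]
    exact ⟨fun h ↦ hyk (h ▸ zero_mem k), fun h ↦ hyk (h ▸ add_mem ha hd)⟩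
  obtain ⟨r, hr⟩ := hsq _ hdet_mem
  have hr0 : r ≠ 0 := fun h ↦ hdet_ne (by rw [hr, h, mul_zero])
  refine ⟨⟨r⁻¹ • !![a, b; c, d], ?_⟩, ⟨r, hr0, ?_⟩, r⁻¹ * y, ?_, ?_⟩
  · rw [det_smul, det_fin_two_of, hr, Fintype.card_fin]
    field_simp
  · intro i j
    fin_cases i <;> fin_cases j <;> simpa [hr0]
  · intro h
    refine hy ?_
    convert mul_mem hdet_mem h using 1
    rw [hr]
    field_simp
  · rw [smul_mulVec, mul_smul]
    congr 1
    ext i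
    fin_cases i
    · simpa [mul_comm] using hab
    · simpa [mul_comm] using hcd

lemma col_conj_of_mulVec_col {n R : Type*} [Fintype n] [DecidableEq n] [CommRing R]
    {M C : Matrix.SpecialLinearGroup n R} {s : R} {j : n} (h : C.1 *ᵥ M.1.col j = s • M.1.col j) :
    (M⁻¹ * C * M).1.col j = s • Pi.single j 1 := by
  calc (M⁻¹ * C * M).1.col j
      = M⁻¹.1 *ᵥ (C.1 *ᵥ M.1.col j) := by
        rw [← mulVec_single_one, ← mulVec_single_one, mulVec_mulVec, mulVec_mulVec,
          Matrix.SpecialLinearGroup.coe_mul, Matrix.SpecialLinearGroup.coe_mul, Matrix.mul_assoc]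
    _ = s • (M⁻¹ * M).1.col j := by
        rw [h, mulVec_smul, ← mulVec_single_one, mulVec_mulVec, ← mulVec_single_one,
          Matrix.SpecialLinearGroup.coe_mul]
    _ = s • Pi.single j 1 := by
        rw [inv_mul_cancel, Matrix.SpecialLinearGroup.coe_one, ← mulVec_single_one, one_mulVec]

lemma mul_transvection_mul_inv {A : SL(2, F)} (hA : A 1 0 = 0) (b : F) :
    A * transvection zero_ne_one b * A⁻¹ =
      transvection zero_ne_one (A 0 0 ^ 2 * b) := by
  have hdet : A 0 0 * A 1 1 = 1 := by
    have := A.det_coe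
    rwa [det_fin_two, hA, mul_zero, sub_zero] at this
  rw [mul_inv_eq_iff_eq_mul]
  ext i j
  fin_cases i <;> fin_cases j <;>
    simp [Matrix.mul_apply, transvection_coe, hA]
  linear_combination (-A 0 0 * b) * hdet

lemma weylElement_mul_transvection_mul_inv (b : F) :
    weylElement F * transvection zero_ne_one (-b) * (weylElement F)⁻¹ =
      transvection one_ne_zero b := by
  rw [mul_inv_eq_iff_eq_mul]
  ext i j
  fin_cases i <;> fin_cases j <;>
    simp [Matrix.mul_apply, transvection_coe, coe_weylElement]

section Overgroup

variable {G : Subgroup SL(2, F)}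

lemma eq_top_of_forall_transvection_mem (hweyl : weylElement F ∈ G)
    (hupper : ∀ b : F, transvection zero_ne_one b ∈ G) : G = ⊤ := by
  have hlower (b : F) : transvection one_ne_zero b ∈ G := by
    rw [← weylElement_mul_transvection_mul_inv]
    exact mul_mem (mul_mem hweyl (hupper _)) (inv_mem hweyl)
  refine (Subgroup.eq_top_iff' G).2 fun A ↦
    SL2.transvection_induction (· ∈ G) (fun i j hij b ↦ ?_) (fun _ _ ↦ mul_mem) A
  fin_cases i <;> fin_cases j
  · exact absurd rfl hij
  · exact hupper b
  · exact hlower b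
  · exact absurd rfl hij

lemma eq_top_of_transvection_mem [Algebra.IsQuadraticExtension k F]
    (hsq : ∀ a ∈ k, IsSquare a) (hG : ∀ A : SL(2, F), IsProjectivelyDefinedOver k A.1 → A ∈ G)
    {x : F} (hx : x ∉ k) (hxG : transvection zero_ne_one x ∈ G) : G = ⊤ := by
  have hweyl : weylElement F ∈ G := hG _ <| .of_forall_mem <| by
    simp [coe_weylElement, Fin.forall_fin_two]
  refine eq_top_of_forall_transvection_mem hweyl fun y ↦ ?_
  obtain ⟨a, ha, b, hb, rfl⟩ := exists_mul_add_eq_of_notMem hx y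
  rw [transvection_add]
  refine mul_mem ?_ <| hG _ <| .of_forall_mem <| by
    simp [transvection_coe, Fin.forall_fin_two, hb]
  obtain ⟨s, rfl⟩ := hsq a ha
  rcases eq_or_ne s 0 with rfl | hs
  · simp
  have hdiag : diag2 s hs ∈ G := hG _ ⟨s, hs, by
    simp [diag2_coe', Fin.forall_fin_two, hs, ha]⟩
  have hconj := mul_transvection_mul_inv (A := diag2 s hs)
    (by simp [diag2_coe']) x
  rw [diag2_coe', of_apply, cons_val', cons_val_zero, sq] at hconj
  exact hconj ▸ mul_mem (mul_mem hdiag hxG) (inv_mem hdiag)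

theorem eq_top_of_not_isProjectivelyDefinedOver [Algebra.IsQuadraticExtension k F]
    (h2 : (2 : F) ≠ 0) (hsq : ∀ a ∈ k, IsSquare a)
    (hG : ∀ A : SL(2, F), IsProjectivelyDefinedOver k A.1 → A ∈ G)
    {A : SL(2, F)} (hAG : A ∈ G) (hA : ¬ IsProjectivelyDefinedOver k A.1) : G = ⊤ := by
  obtain ⟨B, hB, hx⟩ := exists_div_notMem_of_not_isProjectivelyDefinedOver hA
  obtain ⟨C, hC, s, hs, heigen⟩ := exists_mulVec_eq_smul h2 hsq hx
  set M := A * B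
  have hMG : M ∈ G := mul_mem hAG (hG B hB)
  have hM0 : M 1 0 ≠ 0 := fun h0 ↦ hx (by rw [h0, div_zero]; exact zero_mem k)
  have hcol : C.1 *ᵥ M.1.col 0 = s • M.1.col 0 := by
    have hM : M.1.col 0 = M 1 0 • ![M 0 0 / M 1 0, 1] := by
      ext i
      fin_cases i <;> simp [mul_div_cancel₀, hM0]
    rw [hM, mulVec_smul, heigen, smul_comm]
  have hN : (M⁻¹ * C * M).1.col 0 = s • Pi.single 0 1 := col_conj_of_mulVec_col hcol
  have h00 : (M⁻¹ * C * M) 0 0 = s := by simpa using congrFun hN 0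
  have h10 : (M⁻¹ * C * M) 1 0 = 0 := by simpa using congrFun hN 1
  have hNG : M⁻¹ * C * M ∈ G := mul_mem (mul_mem (inv_mem hMG) (hG C hC)) hMG
  have hone : transvection zero_ne_one 1 ∈ G := hG _ <| .of_forall_mem <| by
    simp [transvection_coe, Fin.forall_fin_two]
  refine eq_top_of_transvection_mem hsq hG hs ?_
  have hconj := mul_transvection_mul_inv h10 1
  rw [h00, mul_one] at hconj
  exact hconj ▸ mul_mem (mul_mem hNG hone) (inv_mem hNG)

end Overgroup

lemma exists_notMem_of_isQuadraticExtension [Algebra.IsQuadraticExtension k F] :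
    ∃ x : F, x ∉ k := by
  by_contra! hk
  have hbij : Function.Bijective (Algebra.linearMap k F) :=
    ⟨(algebraMap k F).injective, fun x ↦ ⟨⟨x, hk x⟩, rfl⟩⟩
  have hrank := (LinearEquiv.ofBijective _ hbij).finrank_eq
  rw [Module.finrank_self, Algebra.IsQuadraticExtension.finrank_eq_two] at hrank
  norm_num at hrank

lemma not_isProjectivelyDefinedOver_transvection {x : F} (hx : x ∉ k) :
    ¬ IsProjectivelyDefinedOver k (transvection (zero_ne_one (α := Fin 2)) x).1 := by
  rintro ⟨c, hc, hk⟩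
  have hck : c ∈ k := by simpa [transvection_coe] using hk 0 0
  have hcx : c * x ∈ k := by simpa [transvection_coe] using hk 0 1
  refine hx ?_
  rw [← mul_div_cancel_left₀ x hc]
  exact div_mem hcx hck

theorem isCoatom_baseRingPSL {K : Type*} [Field K] {f : K →+* F}
    [Algebra.IsQuadraticExtension f.fieldRange F] (h2 : (2 : F) ≠ 0)
    (hsq : ∀ a ∈ f.fieldRange, IsSquare a) : IsCoatom (baseRingPSL (Fin 2) f) := by
  refine ⟨fun htop ↦ ?_, fun H hH ↦ ?_⟩
  · obtain ⟨x, hx⟩ := exists_notMem_of_isQuadraticExtension (k := f.fieldRange)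
    refine not_isProjectivelyDefinedOver_transvection hx (mk_mem_baseRingPSL_iff.1 ?_)
    rw [htop]
    exact Subgroup.mem_top _
  · have hsurj := QuotientGroup.mk'_surjective (Subgroup.center SL(2, F))
    obtain ⟨g, hgH, hg⟩ := SetLike.exists_of_lt hH
    obtain ⟨A, rfl⟩ := hsurj g
    have hcomap : H.comap (QuotientGroup.mk' (Subgroup.center SL(2, F))) = ⊤ :=
      eq_top_of_not_isProjectivelyDefinedOver h2 hsq
        (fun B hB ↦ hH.le (mk_mem_baseRingPSL_iff.2 hB)) hgH (mt mk_mem_baseRingPSL_iff.2 hg)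
    exact Subgroup.comap_injective hsurj (hcomap.trans (Subgroup.comap_top _).symm)

end Maximality

section Card

section CommRing

variable (n R : Type*) [Fintype n] [DecidableEq n] [CommRing R]

lemma card_SL_mul_card_units [Nonempty n] :
    Nat.card (Matrix.SpecialLinearGroup n R) * Nat.card Rˣ = Nat.card (GL n R) := by
  have hker : (Matrix.SpecialLinearGroup.toGL : Matrix.SpecialLinearGroup n R →* GL n R).range =
      GeneralLinearGroup.det.ker := by
    ext A
    exact ⟨fun ⟨B, hB⟩ ↦ hB ▸ Units.ext B.2,
      fun hA ↦ ⟨⟨A.1, congrArg Units.val hA⟩, Units.ext rfl⟩⟩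
  rw [← GeneralLinearGroup.det.ker.card_mul_index, Subgroup.index_ker,
    MonoidHom.range_eq_top.2 GeneralLinearGroup.det_surjective, Subgroup.card_top, ← hker,
    Nat.card_congr (MonoidHom.ofInjective Matrix.SpecialLinearGroup.toGL_injective).symm.toEquiv]

lemma card_PGL_mul_card_units [Nonempty n] :
    Nat.card PGL(n, R) * Nat.card Rˣ = Nat.card (GL n R) := by
  have hcenter : Nat.card (Subgroup.center (GL n R)) = Nat.card Rˣ := by
    rw [GeneralLinearGroup.center_eq_range_scalar]
    exact Nat.card_range_of_injective (f := GeneralLinearGroup.scalar n) fun a b h ↦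
      Units.ext (scalar_inj.1 (congrArg Units.val h))
  rw [(Subgroup.center (GL n R)).card_eq_card_quotient_mul_card_subgroup, hcenter]
  rfl

lemma card_PGL_eq_card_SL [Nonempty n] [Finite R] :
    Nat.card PGL(n, R) = Nat.card (Matrix.SpecialLinearGroup n R) :=
  Nat.eq_of_mul_eq_mul_right Nat.card_pos
    ((card_PGL_mul_card_units n R).trans (card_SL_mul_card_units n R).symm)

end CommRing

variable (F : Type*) [Field F]

lemma card_SL_two [Finite F] :
    Nat.card SL(2, F) = Nat.card F * (Nat.card F ^ 2 - 1) := by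
  have := Fintype.ofFinite F
  refine Nat.eq_of_mul_eq_mul_right (Nat.card_pos (α := Fˣ)) ?_
  rw [card_SL_mul_card_units, card_GL_field, Fin.prod_univ_two, Nat.card_units,
    ← Nat.card_eq_fintype_card]
  simp only [Fin.val_zero, Fin.val_one, pow_zero, pow_one]
  rw [sq, ← Nat.mul_sub_one]
  ring

lemma card_PSL_two_mul_two (hF : ringChar F ≠ 2) :
    Nat.card (PSL(2, F)) * 2 = Nat.card SL(2, F) := by
  have hcenter : Nat.card (Subgroup.center SL(2, F)) = 2 := by
    rw [Nat.card_congr (Matrix.SpecialLinearGroup.center_equiv_rootsOfUnity' (0 : Fin 2)).toEquiv,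
      Fintype.card_fin]
    exact (IsPrimitiveRoot.neg_one (ringChar F) hF).card_rootsOfUnity
  rw [(Subgroup.center SL(2, F)).card_eq_card_quotient_mul_card_subgroup, hcenter]

end Card

section FiniteField

variable {K L : Type*} [Field K] [Field L] [Finite L]

lemma ringChar_ne_two_of_odd_card (h : Odd (Nat.card L)) : ringChar L ≠ 2 := by
  have := Fintype.ofFinite L
  rw [Nat.card_eq_fintype_card, Nat.odd_iff] at h
  exact fun h2 ↦ Nat.zero_ne_one <| (FiniteField.even_card_of_char_two h2).symm.trans h

lemma nonempty_ringHom_of_card_eq_pow [Finite K] {n : ℕ} (h : Nat.card L = Nat.card K ^ n) :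
    Nonempty (K →+* L) := by
  have := Fintype.ofFinite K
  have := Fintype.ofFinite L
  obtain ⟨p, _⟩ := CharP.exists K
  obtain ⟨d, hp, hd⟩ := FiniteField.card K p
  have : Fact p.Prime := ⟨hp⟩
  rw [Nat.card_eq_fintype_card, Nat.card_eq_fintype_card] at h
  have : CharP L p := charP_of_card_eq_prime_pow (f := d * n) (by rw [h, hd, pow_mul])
  let := ZMod.algebra K p
  let := ZMod.algebra L p
  have hdvd : Module.finrank (ZMod p) K ∣ Module.finrank (ZMod p) L := by
    refine Dvd.intro n (Nat.pow_right_injective hp.two_le ?_)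
    simp only [pow_mul, FiniteField.pow_finrank_eq_card, h]
  exact (FiniteField.nonempty_algHom_of_finrank_dvd hdvd).map AlgHom.toRingHom

lemma isQuadraticExtension_of_card_eq_sq [Algebra K L]
    (h : Nat.card L = Nat.card K ^ 2) : Algebra.IsQuadraticExtension K L where
  finrank_eq_two' := by
    have := Finite.of_injective _ (algebraMap K L).injective
    have hcard := Module.natCard_eq_pow_finrank (K := K) (V := L)
    exact Nat.pow_right_injective Finite.one_lt_card (hcard.symm.trans h)

lemma isSquare_algebraMap [Algebra K L] [Algebra.IsQuadraticExtension K L] (a : K) :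
    IsSquare (algebraMap K L a) := by
  have := Finite.of_injective _ (algebraMap K L).injective
  have := Fintype.ofFinite K
  have := Fintype.ofFinite L
  by_cases h2 : ringChar L = 2
  · exact FiniteField.isSquare_of_char_two h2 _
  rcases eq_or_ne a 0 with rfl | ha
  · rw [map_zero]
    exact IsSquare.zero
  have hcard : Fintype.card L = Fintype.card K ^ 2 := by
    rw [Module.card_eq_pow_finrank (K := K), Algebra.IsQuadraticExtension.finrank_eq_two]
  obtain ⟨m, hm⟩ : Odd (Fintype.card K) := by
    have := FiniteField.odd_card_of_char_ne_two h2
    rw [← Nat.odd_iff, hcard] at this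
    exact (Nat.odd_pow_iff two_ne_zero).1 this
  have hexp : Fintype.card L / 2 = (Fintype.card K - 1) * (m + 1) := by
    rw [hcard, hm, show (2 * m + 1) ^ 2 = 2 * (2 * m * (m + 1)) + 1 by ring]
    lia
  rw [FiniteField.isSquare_iff h2 ((map_ne_zero _).2 ha), hexp, ← map_pow, pow_mul,
    FiniteField.pow_card_sub_one_eq_one a ha, one_pow, map_one]

end FiniteField

section Index

variable {K L : Type*} [Field K] [Finite K] [Field L] [Finite L] {f : K →+* L}

lemma index_baseRingPSL_mul_two (hcard : Nat.card L = Nat.card K ^ 2) (hL : ringChar L ≠ 2)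
    (e : baseRingPSL (Fin 2) f ≃* PGL(2, K)) :
    (baseRingPSL (Fin 2) f).index * 2 = Nat.card K * (Nat.card K ^ 2 + 1) := by
  have hPSL := card_PSL_two_mul_two L hL
  rw [← (baseRingPSL (Fin 2) f).card_mul_index, Nat.card_congr e.toEquiv, card_PGL_eq_card_SL,
    card_SL_two, card_SL_two, hcard] at hPSL
  set q := Nat.card K
  have hq : 1 < q := Finite.one_lt_card
  have hpos : 0 < q * (q ^ 2 - 1) :=
    Nat.mul_pos (by lia) (Nat.sub_pos_of_lt (Nat.one_lt_pow two_ne_zero hq))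
  have hfactor : (q ^ 2) ^ 2 - 1 = (q ^ 2 + 1) * (q ^ 2 - 1) := Nat.sq_sub_sq (q ^ 2) 1
  rw [hfactor] at hPSL
  exact Nat.eq_of_mul_eq_mul_left hpos (by linear_combination hPSL)

lemma odd_index_baseRingPSL (hcard : Nat.card L = Nat.card K ^ 2) (hodd : Odd (Nat.card K))
    (e : baseRingPSL (Fin 2) f ≃* PGL(2, K)) : Odd (baseRingPSL (Fin 2) f).index := by
  have hindex := index_baseRingPSL_mul_two hcard (ringChar_ne_two_of_odd_card (hcard ▸ hodd.pow)) e
  obtain ⟨m, hm⟩ := hodd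
  have : (baseRingPSL (Fin 2) f).index = (2 * m + 1) * (2 * (m ^ 2 + m) + 1) := by
    rw [hm] at hindex
    linarith
  rw [this]
  exact (odd_two_mul_add_one m).mul (odd_two_mul_add_one _)

end Index

/-- for `q₀` an odd prime power, `F₀` a field with `q₀` elements and `F` a
field with `q₀²` elements, `PSL₂(F)` has a maximal subgroup of odd index isomorphic to
`PGL₂(F₀)`. -/
theorem psl2_maximal_odd_index_pgl2 (q₀ : ℕ) (hq_odd : Odd q₀) (hq_pp : IsPrimePow q₀)
    (F₀ : Type) [Field F₀] [Fintype F₀] (hF₀ : Fintype.card F₀ = q₀)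
    (F : Type) [Field F] [Fintype F] (hF : Fintype.card F = q₀ ^ 2) :
    ∃ H : Subgroup (Matrix.ProjectiveSpecialLinearGroup (Fin 2) F),
      IsCoatom H ∧ Odd H.index ∧
        Nonempty (H ≃* ProjectiveGeneralLinearGroup (Fin 2) F₀) := by
  have hF₀' : Nat.card F₀ = q₀ := Nat.card_eq_fintype_card.trans hF₀
  have hcard : Nat.card F = Nat.card F₀ ^ 2 := by rw [Nat.card_eq_fintype_card, hF, hF₀']
  have hodd : Odd (Nat.card F₀) := hF₀' ▸ hq_odd
  obtain ⟨f⟩ := nonempty_ringHom_of_card_eq_pow hcard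
  have hrange : Nat.card f.fieldRange = Nat.card F₀ := Nat.card_range_of_injective f.injective
  have hquad := isQuadraticExtension_of_card_eq_sq (hcard.trans (congrArg (· ^ 2) hrange.symm))
  have hsq (a : F) (ha : a ∈ f.fieldRange) : IsSquare a :=
    isSquare_algebraMap (⟨a, ha⟩ : f.fieldRange)
  have hchar : ringChar F ≠ 2 := ringChar_ne_two_of_odd_card (hcard ▸ hodd.pow)
  obtain ⟨e⟩ := nonempty_baseRingPSL_mulEquiv (n := Fin 2) f.injective fun u ↦ by
    obtain ⟨r, hr⟩ := hsq (f u) ⟨u, rfl⟩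
    have hr0 : r ≠ 0 := by
      rintro rfl
      simp at hr
    exact ⟨Units.mk0 r hr0, Units.ext (by simp [sq, hr])⟩
  exact ⟨baseRingPSL (Fin 2) f, isCoatom_baseRingPSL (Ring.two_ne_zero hchar) hsq,
    odd_index_baseRingPSL hcard hodd e, ⟨e⟩⟩
end

section
/- Let q be an odd prime power, F a finite field with q elements, n ≥ 2, and W a submodule of Fⁿ (i.e., W : Submodule F (Fin n → F)) with Module.finrank F W = m. Let H be the stabilizer of W in SL(n,F), i.e., the subgroup {A ∈ SL(n,F) : Submodule.map (Matrix.toLin' A) W = W}. Then the index of H in SL(n,F) is odd if and only if every binary digit of m is at most the corresponding binary digit of n, i.e., ∀ i, Nat.testBit m i = true → Nat.testBit n i = true. -/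
/-- The stabilizer in `SL(n, F)` of a submodule `W` of `Fⁿ`, consisting of those special
linear matrices `A` with `Submodule.map (Matrix.toLin' A) W = W`. -/
def slSubspaceStabilizer (F : Type*) [Field F] (n : ℕ) (W : Submodule F (Fin n → F)) :
    Subgroup (Matrix.SpecialLinearGroup (Fin n) F) where
  carrier := {A | Submodule.map (Matrix.toLin' (A : Matrix (Fin n) (Fin n) F)) W = W}
  one_mem' := by
    simp [Matrix.SpecialLinearGroup.coe_one, Matrix.toLin'_one]
  mul_mem' := by
    intro A B hA hB
    simp only [Set.mem_setOf_eq] at *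
    rw [Matrix.SpecialLinearGroup.coe_mul, Matrix.toLin'_mul, Submodule.map_comp, hB, hA]
  inv_mem' := by
    intro A hA
    simp only [Set.mem_setOf_eq] at *
    have h1 : ((A⁻¹ : Matrix.SpecialLinearGroup (Fin n) F) : Matrix (Fin n) (Fin n) F) *
        (A : Matrix (Fin n) (Fin n) F) = 1 := by
      rw [← Matrix.SpecialLinearGroup.coe_mul, inv_mul_cancel,
        Matrix.SpecialLinearGroup.coe_one]
    conv_lhs => rw [← hA]
    rw [← Submodule.map_comp, ← Matrix.toLin'_mul, h1, Matrix.toLin'_one, Submodule.map_id]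

/-!
`SL(V)` acts transitively on the subspaces of a given dimension, so the index counts the
`m`-dimensional subspaces of `Fⁿ`. The diagonal sign matrices form a 2-group acting on these, and
since `2` is invertible the only subspaces they all preserve are the coordinate subspaces, so the
index is congruent to `n.choose m` modulo `2`. Lucas' theorem determines the parity of the latter.
-/

open scoped Pointwise

open MulAction Module

section Binomial

variable {p n k : ℕ}

theorem prime_dvd_choose_iff_lt (hp : p.Prime) (hn : n < p) : p ∣ n.choose k ↔ n < k := by
  refine ⟨fun hdvd ↦ ?_, fun hnk ↦ by simp [Nat.choose_eq_zero_of_lt hnk]⟩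
  by_contra! hkn
  have hfactorial : p ∣ n.factorial :=
    Nat.choose_mul_factorial_mul_factorial hkn ▸ (hdvd.mul_right _).mul_right _
  exact hn.not_ge (hp.dvd_factorial.mp hfactorial)

theorem prime_not_dvd_choose_iff_forall_digit_le (hp : p.Prime) :
    ¬ p ∣ n.choose k ↔ ∀ i, k / p ^ i % p ≤ n / p ^ i % p := by
  have := Fact.mk hp
  obtain ⟨a, hna, hka⟩ : ∃ a, n < p ^ a ∧ k < p ^ a :=
    ⟨n + k, (Nat.lt_pow_self hp.one_lt).trans_le (Nat.pow_le_pow_right hp.pos (by omega)),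
      (Nat.lt_pow_self hp.one_lt).trans_le (Nat.pow_le_pow_right hp.pos (by omega))⟩
  rw [(Choose.lucas_theorem_nat hna hka).dvd_iff dvd_rfl, hp.prime.dvd_finsetProd_iff]
  simp only [Finset.mem_range, prime_dvd_choose_iff_lt hp (Nat.mod_lt _ hp.pos), not_exists,
    not_and, not_lt]
  refine forall_congr' fun i ↦ ⟨fun hle ↦ ?_, fun hle _ ↦ hle⟩
  rcases lt_or_ge i a with hi | hi
  · exact hle hi
  · rw [Nat.div_eq_of_lt (hka.trans_le (Nat.pow_le_pow_right hp.pos hi)), Nat.zero_mod]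
    exact Nat.zero_le _

theorem odd_choose_iff_forall_testBit :
    Odd (n.choose k) ↔ ∀ i, k.testBit i = true → n.testBit i = true := by
  rw [← Nat.not_even_iff_odd, even_iff_two_dvd,
    prime_not_dvd_choose_iff_forall_digit_le Nat.prime_two]
  refine forall_congr' fun i ↦ ?_
  simp only [Nat.testBit_eq_decide_div_mod_eq, decide_eq_true_eq]
  omega

end Binomial

section SpecialLinearGroup

variable {F V : Type*} [Field F] [AddCommGroup V] [Module F V] [FiniteDimensional F V]

theorem exists_det_eq_smul_eq {W : Submodule F V} (hW : W ≠ ⊥) (a : Fˣ) :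
    ∃ g : V ≃ₗ[F] V, g.det = a ∧ g • W = W := by
  obtain ⟨w, hwW, hw⟩ := W.ne_bot_iff.mp hW
  obtain ⟨f, hfw⟩ : ∃ f : Dual F V, f w = 1 := Projective.exists_dual_eq_one F hw
  -- `g x = x + f x • (a - 1) • w` has determinant `1 + f ((a - 1) • w) = a`.
  let g := LinearEquiv.dilatransvection (f := f) (v := (a.val - 1) • w) (by simp [hfw])
  refine ⟨g, ?_, ?_⟩
  · simp [g, ← Units.val_inj, LinearEquiv.coe_det, LinearMap.transvection.det, hfw]
  · refine Submodule.eq_of_le_of_finrank_eq ?_ (g.finrank_map_eq W)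
    rintro _ ⟨x, hx, rfl⟩
    change g x ∈ W
    rw [LinearEquiv.dilatransvection.apply]
    exact W.add_mem hx (W.smul_mem _ (W.smul_mem _ hwW))

theorem exists_linearEquiv_smul_eq_of_finrank_eq {W U : Submodule F V}
    (h : finrank F W = finrank F U) : ∃ g : V ≃ₗ[F] V, g • W = U := by
  obtain ⟨g, hg⟩ := Submodule.exists_linearEquiv_restrict_eq (LinearEquiv.ofFinrankEq W U h)
  refine ⟨g, Submodule.eq_of_le_of_finrank_eq ?_ ((g.finrank_map_eq W).trans h)⟩
  rintro _ ⟨x, hx, rfl⟩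
  exact hg ⟨x, hx⟩ ▸ Subtype.coe_prop _

theorem exists_specialLinearGroup_smul_eq_of_finrank_eq {W U : Submodule F V}
    (h : finrank F W = finrank F U) : ∃ g : SpecialLinearGroup F V, g • W = U := by
  rcases eq_or_ne W ⊥ with rfl | hW
  · have hU : U = ⊥ := Submodule.finrank_eq_zero.mp (by rw [← h, finrank_bot])
    exact ⟨1, by rw [one_smul, hU]⟩
  · obtain ⟨g, hgW⟩ := exists_linearEquiv_smul_eq_of_finrank_eq h
    obtain ⟨k, hk, hkW⟩ := exists_det_eq_smul_eq hW g.det⁻¹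
    refine ⟨⟨g * k, by rw [map_mul, hk, mul_inv_cancel]⟩, ?_⟩
    change (g * k) • W = U
    rw [mul_smul, hkW, hgW]

theorem orbit_specialLinearGroup_submodule (W : Submodule F V) :
    orbit (SpecialLinearGroup F V) W = {U : Submodule F V | finrank F U = finrank F W} := by
  ext U
  refine ⟨?_, fun hU ↦ exists_specialLinearGroup_smul_eq_of_finrank_eq hU.symm⟩
  rintro ⟨g, rfl⟩
  exact g.toLinearEquiv.finrank_map_eq W

end SpecialLinearGroup

theorem index_slSubspaceStabilizer {F : Type*} [Field F] {n : ℕ} (W : Submodule F (Fin n → F)) :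
    (slSubspaceStabilizer F n W).index =
      {U : Submodule F (Fin n → F) | finrank F U = finrank F W}.ncard := by
  let e : Matrix.SpecialLinearGroup (Fin n) F ≃* SpecialLinearGroup F (Fin n → F) :=
    Matrix.SpecialLinearGroup.toLin'_equiv
  have hcomap : slSubspaceStabilizer F n W =
      (stabilizer (SpecialLinearGroup F (Fin n → F)) W).comap (e : _ →* _) := rfl
  rw [hcomap, Subgroup.index_comap_of_surjective _ e.surjective, index_stabilizer,
    orbit_specialLinearGroup_submodule]

theorem ncard_modEq_ncard_inter_fixedPoints {G X : Type*} [Group G] [MulAction G X] {p : ℕ}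
    [Fact p.Prime] (hG : IsPGroup p G) {s : Set X} (hs : s.Finite)
    (hsmul : ∀ (g : G), ∀ x ∈ s, g • x ∈ s) :
    s.ncard ≡ (s ∩ fixedPoints G X).ncard [MOD p] := by
  let S : SubMulAction G X := ⟨s, fun g {x} ↦ hsmul g x⟩
  have : Finite S := hs
  have himage : Subtype.val '' fixedPoints G S = s ∩ fixedPoints G X := by
    ext x
    simp only [S, mem_fixedPoints, Set.mem_image, Set.mem_inter_iff, Subtype.exists,
      Subtype.ext_iff]
    constructor
    · rintro ⟨y, hy, hfixed, rfl⟩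
      exact ⟨hy, hfixed⟩
    · exact fun ⟨hx, hfixed⟩ ↦ ⟨x, hx, hfixed, rfl⟩
  rw [← himage, Set.ncard_image_of_injective _ Subtype.val_injective]
  exact hG.card_modEq_card_fixedPoints S

theorem mem_fixedPoints_of_forall_smul_le {G X : Type*} [Group G] [PartialOrder X] [MulAction G X]
    [CovariantClass G X HSMul.hSMul LE.le] {x : X} (hx : ∀ g : G, g • x ≤ x) :
    x ∈ fixedPoints G X :=
  fun g ↦ (hx g).antisymm <| by simpa using smul_mono_right g (hx g⁻¹)

section SignChanges

variable {ι R : Type*}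

instance pi_smulCommClass_const {M S : Type*} [SMul M R] [SMul S R] [SMulCommClass M S R] :
    SMulCommClass (ι → M) S (ι → R) where
  smul_comm ε c v := funext fun i ↦ smul_comm (ε i) c (v i)

theorem isPGroup_two_pi_intUnits : IsPGroup 2 (ι → ℤˣ) :=
  fun ε ↦ ⟨1, funext fun i ↦ Int.units_sq (ε i)⟩

theorem sub_mulSingle_neg_one_smul [DecidableEq ι] [Ring R] (v : ι → R) (i : ι) :
    v - (Pi.mulSingle i (-1) : ι → ℤˣ) • v = Pi.single i (2 * v i) := by
  ext j
  rcases eq_or_ne j i with rfl | hj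
  · simp [two_mul]
  · simp [hj]

theorem single_one_mem_of_mem_fixedPoints [DecidableEq ι] [DivisionRing R] (h2 : (2 : R) ≠ 0)
    {U : Submodule R (ι → R)} (hU : U ∈ fixedPoints (ι → ℤˣ) (Submodule R (ι → R)))
    {v : ι → R} (hv : v ∈ U) {i : ι} (hvi : v i ≠ 0) : Pi.single i 1 ∈ U := by
  have hflip : (Pi.mulSingle i (-1) : ι → ℤˣ) • v ∈ U :=
    hU _ ▸ Submodule.smul_mem_pointwise_smul v _ U hv
  have hsingle : Pi.single i (2 * v i) ∈ U :=
    sub_mulSingle_neg_one_smul v i ▸ U.sub_mem hv hflip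
  have hscaled := U.smul_mem (2 * v i)⁻¹ hsingle
  rwa [← Pi.single_smul, smul_eq_mul, inv_mul_cancel₀ (mul_ne_zero h2 hvi)] at hscaled

variable [Finite ι]

theorem smul_spanSubset_le [Ring R] (ε : ι → ℤˣ) (s : Set ι) :
    ε • Pi.spanSubset R s ≤ Pi.spanSubset R s := by
  rintro _ ⟨v, hv, rfl⟩
  refine Pi.mem_spanSubset_iff.mpr fun i hi ↦ ?_
  change ε i • v i = 0
  rw [Pi.mem_spanSubset_iff.mp hv i hi, smul_zero]

theorem single_one_mem_spanSubset_iff [DecidableEq ι] [Semiring R] [Nontrivial R] {s : Set ι}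
    {i : ι} : Pi.single i (1 : R) ∈ Pi.spanSubset R s ↔ i ∈ s := by
  rw [Pi.mem_spanSubset_iff]
  refine ⟨fun h ↦ ?_, fun hi j hj ↦ Pi.single_eq_of_ne (by rintro rfl; exact hj hi) _⟩
  by_contra hi
  simpa using h i hi

theorem spanSubset_injective [Semiring R] [Nontrivial R] :
    Function.Injective (Pi.spanSubset R : Set ι → Submodule R (ι → R)) := by
  classical
  intro s t hst
  ext i
  rw [← single_one_mem_spanSubset_iff (R := R), hst, single_one_mem_spanSubset_iff]

theorem ncard_inter_range_spanSubset [Semiring R] [StrongRankCondition R] (m : ℕ) :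
    ({U : Submodule R (ι → R) | finrank R U = m} ∩ Set.range (Pi.spanSubset R)).ncard =
      (Nat.card ι).choose m := by
  have := nontrivial_of_invariantBasisNumber R
  let coordinateSubmodule (s : Finset ι) : Submodule R (ι → R) := Pi.spanSubset R (s : Set ι)
  have hinj : coordinateSubmodule.Injective := spanSubset_injective.comp Finset.coe_injective
  have himage : {U : Submodule R (ι → R) | finrank R U = m} ∩ Set.range (Pi.spanSubset R) =
      coordinateSubmodule '' Set.powersetCard ι m := by
    ext U
    constructor
    · rintro ⟨hU, s, rfl⟩
      rw [Set.mem_ofPred_eq, Pi.dim_spanSubset] at hU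
      exact ⟨s.toFinite.toFinset, (Set.ncard_eq_toFinset_card s).symm.trans hU,
        by simp [coordinateSubmodule]⟩
    · rintro ⟨s, hs, rfl⟩
      exact ⟨by rw [Set.mem_ofPred_eq, Pi.dim_spanSubset, Set.ncard_coe_finset, hs], s, rfl⟩
  rw [himage, Set.ncard_image_of_injective _ hinj]
  exact Set.powersetCard.card ι m

theorem fixedPoints_pi_intUnits_submodule [DivisionRing R] (h2 : (2 : R) ≠ 0) :
    fixedPoints (ι → ℤˣ) (Submodule R (ι → R)) = Set.range (Pi.spanSubset R) := by
  classical
  ext U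
  constructor
  · intro hU
    refine ⟨{i | Pi.single i 1 ∈ U}, le_antisymm ?_ fun v hv ↦ ?_⟩
    · refine Submodule.span_le.mpr ?_
      rintro _ ⟨i, hi, rfl⟩
      simpa using hi
    · refine Pi.mem_spanSubset_iff.mpr fun i hi ↦ ?_
      contrapose! hi
      exact single_one_mem_of_mem_fixedPoints h2 hU hv hi
  · rintro ⟨s, rfl⟩
    exact mem_fixedPoints_of_forall_smul_le (smul_spanSubset_le · s)

theorem ncard_subspaces_modEq_choose [DivisionRing R] [Finite R] (h2 : (2 : R) ≠ 0) (m : ℕ) :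
    {U : Submodule R (ι → R) | finrank R U = m}.ncard ≡ (Nat.card ι).choose m [MOD 2] := by
  have : Finite (Submodule R (ι → R)) := Finite.of_injective _ SetLike.coe_injective
  rw [← ncard_inter_range_spanSubset (R := R), ← fixedPoints_pi_intUnits_submodule h2]
  refine ncard_modEq_ncard_inter_fixedPoints isPGroup_two_pi_intUnits (Set.toFinite _) ?_
  rintro ε U rfl
  exact (DistribMulAction.toLinearEquiv R (ι → R) ε).finrank_map_eq U

end SignChanges

/-- the stabilizer in `SL(n, F)` (`q` odd, `|F| = q`, `n ≥ 2`) of an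
`m`-dimensional subspace of `Fⁿ` has odd index iff every binary digit of `m` is at most
the corresponding binary digit of `n`. -/
theorem sl_subspace_stabilizer_odd_index_iff (q : ℕ) (hq_odd : Odd q) (hq_pp : IsPrimePow q)
    (F : Type) [Field F] [Fintype F] (hF : Fintype.card F = q) (n : ℕ) (hn : 2 ≤ n)
    (W : Submodule F (Fin n → F)) (m : ℕ) (hm : Module.finrank F W = m) :
    Odd (slSubspaceStabilizer F n W).index ↔
      ∀ i, Nat.testBit m i = true → Nat.testBit n i = true := by
  have h2 : (2 : F) ≠ 0 := Ring.two_ne_zero fun hchar ↦ by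
    have := FiniteField.even_card_iff_char_two.mp hchar
    grind
  have hcongr : (slSubspaceStabilizer F n W).index ≡ n.choose m [MOD 2] := by
    rw [index_slSubspaceStabilizer, hm]
    simpa using ncard_subspaces_modEq_choose (ι := Fin n) h2 m
  rw [← odd_choose_iff_forall_testBit, Nat.odd_iff, hcongr, Nat.odd_iff]
end
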